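/- arXiv:1309.4620 — 5 statements merged into one kernel-verified Lean document; each statement's English description precedes it below -/
import Mathlib

section
/- Let A be a reduced Noetherian commutative ring whose integral closure Ā in Q(A) is a finite A-module, let A ⊆ A′ ⊆ Ā be an intermediate ring, let W ⊆ Spec(A), let J be a test ideal at W, and set J′ = √(J·A′). If A′ = End_{A′}(J′), i.e., every x ∈ Q(A) with x·J′ ⊆ J′ lies in A′, then the localization A′_P (at the multiplicative set A∖P) is integrally closed in its total ring of fractions for every P ∈ W. -/
set_option synthInstance.maxHeartbeats 1000000
set_option maxHeartbeats 1000000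

open scoped nonZeroDivisors

noncomputable section

/-- The conductor of a reduced ring `A` in its integral closure inside `Q(A)`:
`C_A = {a : A | a · Ā ⊆ A}`. -/
def conductorIdeal (A : Type*) [CommRing A] : Ideal A where
  carrier := {a : A | ∀ x ∈ integralClosure A (FractionRing A),
      algebraMap A (FractionRing A) a * x ∈ (algebraMap A (FractionRing A)).range}
  add_mem' := by
    intro a b ha hb x hx
    rw [map_add, add_mul]
    exact add_mem (ha x hx) (hb x hx)
  zero_mem' := by
    intro x hx
    rw [map_zero, zero_mul]
    exact zero_mem _
  smul_mem' := by
    intro c a ha x hx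
    obtain ⟨y, hy⟩ := ha x hx
    refine ⟨c * y, ?_⟩
    rw [map_mul, hy, smul_eq_mul, map_mul, mul_assoc]


/-- A test ideal at a subset `W ⊆ Spec A`. -/
def IsTestIdealAt (A : Type*) [CommRing A] (W : Set (PrimeSpectrum A))
    (J : Ideal A) : Prop :=
  (∃ g ∈ J, g ∈ A⁰) ∧ J.IsRadical ∧
    ∀ P ∈ W,
      PrimeSpectrum.zeroLocus
          (conductorIdeal (Localization.AtPrime P.asIdeal) :
            Set (Localization.AtPrime P.asIdeal)) ⊆
        PrimeSpectrum.zeroLocus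
          (J.map (algebraMap A (Localization.AtPrime P.asIdeal)) :
            Set (Localization.AtPrime P.asIdeal))


theorem gr_mul_self_eq_zero {R : Type*} [CommRing R] [IsReduced R] {x : R}
    (h : x * x = 0) : x = 0 :=
  IsReduced.eq_zero x ⟨2, by rw [pow_two, h]⟩

/-- In a reduced Noetherian ring every element can be completed to a non-zerodivisor. -/
theorem gr_exists_nzd {R : Type*} [CommRing R] [IsReduced R] [IsNoetherianRing R] (b : R) :
    ∃ c, b * c = 0 ∧ b + c ∈ R⁰ := by
  let K : Ideal R := Ideal.span {b} ⊔ Ideal.span {c | b * c = 0}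
  have key : ∃ z ∈ K, z ∈ R⁰ := by
    by_contra! h
    have hd : Disjoint (K : Set R) (nonZeroDivisors R) := Set.disjoint_left.mpr h
    obtain ⟨_, w, hw, hw0⟩ := SetLike.lt_iff_le_and_exists.mp
      (Ideal.bot_lt_annihilator_of_disjoint_nonZeroDivisors hd)
    have hw' : ∀ k ∈ K, w * k = 0 := fun k hk => by
      simpa using Submodule.mem_annihilator.mp hw k hk
    have h1 : w * b = 0 := hw' b (Ideal.mem_sup_left (Ideal.mem_span_singleton_self b))
    have h2 : w * w = 0 := hw' w (Ideal.mem_sup_right (Ideal.subset_span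
      (by change b * w = 0; rw [mul_comm]; exact h1)))
    exact hw0 ((gr_mul_self_eq_zero h2))
  obtain ⟨z, hz, hznz⟩ := key
  obtain ⟨u, hu, c, hc, rfl⟩ := Submodule.mem_sup.mp hz
  obtain ⟨r, rfl⟩ := Ideal.mem_span_singleton'.mp hu
  have hbc : b * c = 0 := by
    refine Submodule.span_induction (p := fun x _ => b * x = 0) ?_ ?_ ?_ ?_ hc
    · exact fun x hx => hx
    · simp
    · intro x y _ _ hx hy; rw [mul_add, hx, hy, add_zero]
    · intro a x _ hx; rw [smul_eq_mul, mul_left_comm, hx, mul_zero]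
  refine ⟨c, hbc, ?_⟩
  rw [mem_nonZeroDivisors_iff_right]
  intro w hw
  have h1 : (b * w) * (b * w) = 0 := by linear_combination (b * w) * hw - w * w * hbc
  have h2 : b * w = 0 := gr_mul_self_eq_zero h1
  have h3 : w * (r * b + c) = 0 := by linear_combination hw + (r - 1) * h2
  exact (mem_nonZeroDivisors_iff_right.mp hznz) w h3

theorem gr_isFractionRing {A Q : Type*} [CommRing A] [CommRing Q] [Algebra A Q]
    [IsFractionRing A Q] (A' : Subalgebra A Q) : IsFractionRing A' Q := by
  have hval : ∀ z : A', algebraMap A' Q z = (z : Q) := fun _ => rfl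
  refine ⟨⟨?_, ?_, ?_⟩⟩
  · rintro ⟨z, hz⟩
    change IsUnit (z : Q)
    obtain ⟨⟨u, v⟩, huv⟩ := IsLocalization.surj A⁰ (z : Q)
    have hv := IsLocalization.map_units Q v
    have hu : u ∈ A⁰ := by
      rw [mem_nonZeroDivisors_iff_right]
      intro w hw
      apply IsFractionRing.injective A Q
      have h1 : (algebraMap A Q w * (z : Q)) * algebraMap A Q v = 0 := by
        rw [mul_assoc, huv, ← map_mul, hw, map_zero]
      have h2 := hv.mul_left_eq_zero.mp h1
      have h3 : algebraMap A A' w * z = 0 := Subtype.ext h2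
      have h4 := (mem_nonZeroDivisors_iff_right.mp hz) _ h3
      rw [map_zero]
      exact congrArg Subtype.val h4
    have := IsLocalization.map_units Q ⟨u, hu⟩
    rw [← huv] at this
    exact isUnit_of_mul_isUnit_left this
  · intro q
    obtain ⟨⟨u, v⟩, huv⟩ := IsLocalization.surj A⁰ q
    refine ⟨(algebraMap A A' u, ⟨algebraMap A A' v, ?_⟩), huv⟩
    rw [mem_nonZeroDivisors_iff_right]
    intro w hw
    have h : (w : Q) * algebraMap A Q v = 0 := congrArg Subtype.val hw
    exact Subtype.ext ((IsLocalization.map_units Q v).mul_left_eq_zero.mp h)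
  · intro x y h
    exact ⟨1, by rw [Subtype.ext h]⟩

theorem gr_closed {R Q B T : Type*} [CommRing R] [IsReduced R] [IsNoetherianRing R]
    [CommRing Q] [Algebra R Q] [IsFractionRing R Q] (M : Submonoid R)
    [CommRing B] [Algebra R B] [IsLocalization M B]
    [CommRing T] [Algebra B T] [IsFractionRing B T] [Algebra R T] [IsScalarTower R B T]
    (H : ∀ x : Q, IsIntegral R x → ∃ m ∈ M, ∃ r : R, algebraMap R Q m * x = algebraMap R Q r) :
    integralClosure B T = ⊥ := by
  rw [eq_bot_iff]
  intro y hy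
  have hy : IsIntegral B y := hy
  have hRT : ∀ r, algebraMap R T r = algebraMap B T (algebraMap R B r) :=
    IsScalarTower.algebraMap_apply R B T
  have hunit : ∀ d : R⁰, IsUnit (algebraMap R T d) := by
    intro d
    rw [hRT]
    exact IsLocalization.map_units T
      (⟨_, IsLocalization.map_nonZeroDivisors_le M B (Submonoid.mem_map_of_mem _ d.2)⟩ : B⁰)
  have hunitM : ∀ m ∈ M, IsUnit (algebraMap R T m) := by
    intro d hd
    rw [hRT]
    exact (IsLocalization.map_units B (⟨d, hd⟩ : M)).map _
  let φ : Q →+* T := IsLocalization.lift (M := R⁰) hunit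
  have hφ : ∀ r, φ (algebraMap R Q r) = algebraMap R T r := IsLocalization.lift_eq hunit
  have hker0 : ∀ r, algebraMap R T r = 0 → ∃ m ∈ M, m * r = 0 := by
    intro r hr
    rw [hRT] at hr
    have h := (IsFractionRing.injective B T) (hr.trans (map_zero _).symm)
    obtain ⟨m, hm⟩ := (IsLocalization.map_eq_zero_iff M B r).mp h
    exact ⟨m, m.2, hm⟩
  have hker : ∀ q, φ q = 0 → ∃ m ∈ M, algebraMap R Q m * q = 0 := by
    intro q hq
    obtain ⟨⟨u, v⟩, huv⟩ := IsLocalization.surj R⁰ q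
    have h1 : algebraMap R T u = 0 := by rw [← hφ, ← huv, map_mul, hq, zero_mul]
    obtain ⟨m, hm, hmu⟩ := hker0 u h1
    refine ⟨m, hm, (IsLocalization.map_units Q v).mul_left_eq_zero.mp ?_⟩
    rw [mul_assoc, huv, ← map_mul, hmu, map_zero]
  obtain ⟨q, rfl⟩ : ∃ q, φ q = y := by
    obtain ⟨⟨a, b, hb⟩, hab⟩ := IsLocalization.surj B⁰ y
    obtain ⟨⟨a1, m1⟩, ha1⟩ := IsLocalization.surj M a
    obtain ⟨⟨b1, m2⟩, hb1⟩ := IsLocalization.surj M b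
    simp only at hab ha1 hb1
    obtain ⟨c, hc0, hc⟩ := gr_exists_nzd (b1 * m1)
    have hcB : algebraMap R B c = 0 := by
      have h1 : algebraMap R B b1 * algebraMap R B m1 * algebraMap R B c = 0 := by
        rw [← map_mul, ← map_mul, hc0, map_zero]
      rw [← hb1] at h1
      have h2 : algebraMap R B c * b = 0 := by
        refine ((IsLocalization.map_units B m1).mul (IsLocalization.map_units B m2)).mul_left_eq_zero.mp ?_
        linear_combination h1
      exact (mem_nonZeroDivisors_iff_right.mp hb) _ h2
    have hcT : algebraMap R T c = 0 := by rw [hRT, hcB, map_zero]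
    refine ⟨IsLocalization.mk' Q (a1 * m2) ⟨_, hc⟩, ?_⟩
    have h3 := congrArg φ (IsLocalization.mk'_spec Q (a1 * (m2 : R)) (⟨_, hc⟩ : R⁰))
    rw [map_mul, hφ, hφ] at h3
    refine (hunit ⟨_, hc⟩).mul_left_injective ?_
    refine h3.trans ?_
    have h4 := congrArg (algebraMap B T) ha1
    have h5 := congrArg (algebraMap B T) hb1
    simp only [map_mul, map_add, hRT] at h4 h5 ⊢
    rw [← h4, ← h5, ← hab, ← hRT c, hcT]
    ring
  obtain ⟨m, hm⟩ := IsIntegral.exists_multiple_integral_of_isLocalization M _ hy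
  obtain ⟨p, hp, hpe⟩ := hm
  have hme : m • φ q = φ (algebraMap R Q m * q) := by
    rw [map_mul, hφ, Submonoid.smul_def, Algebra.smul_def]
  have hcomp : φ.comp (algebraMap R Q) = algebraMap R T := RingHom.ext hφ
  rw [hme, ← hcomp, ← Polynomial.hom_eval₂] at hpe
  obtain ⟨t, ht, hte⟩ := hker _ hpe
  have hint : IsIntegral R (algebraMap R Q t * (algebraMap R Q m * q)) := by
    refine ⟨(p * Polynomial.X).scaleRoots t, ?_, ?_⟩
    · rw [Polynomial.monic_scaleRoots_iff]
      exact hp.mul Polynomial.monic_X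
    · rw [Polynomial.scaleRoots_eval₂_mul, Polynomial.eval₂_mul]
      rcases subsingleton_or_nontrivial R with hR | hR
      · have := (algebraMap R Q).codomain_trivial
        exact Subsingleton.elim _ _
      rw [Polynomial.natDegree_mul_X hp.ne_zero, pow_succ]
      linear_combination (algebraMap R Q t ^ p.natDegree * Polynomial.eval₂ (algebraMap R Q) (algebraMap R Q m * q) Polynomial.X) * hte
  obtain ⟨s, hs, r, hr⟩ := H _ hint
  have hfin := congrArg φ hr
  simp only [map_mul, hφ] at hfin
  rw [Algebra.mem_bot]
  have hM : s * (t * m) ∈ M := mul_mem hs (mul_mem ht m.2)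
  refine ⟨IsLocalization.mk' B r ⟨_, hM⟩, ?_⟩
  refine (hunitM _ hM).mul_left_injective ?_
  have h6 := congrArg (algebraMap B T) (IsLocalization.mk'_spec B r (⟨_, hM⟩ : M))
  rw [map_mul, ← hRT, ← hRT] at h6
  refine h6.trans ?_
  simp only [map_mul]
  rw [← hfin]
  ring

/-- The conductor condition at `P` gives, for integral `x` and `j ∈ J`, a multiplier. -/
theorem gr_conductor {A : Type*} [CommRing A] (P : PrimeSpectrum A) (J : Ideal A)
    (h : PrimeSpectrum.zeroLocus
          (conductorIdeal (Localization.AtPrime P.asIdeal) :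
            Set (Localization.AtPrime P.asIdeal)) ⊆
        PrimeSpectrum.zeroLocus
          (J.map (algebraMap A (Localization.AtPrime P.asIdeal)) :
            Set (Localization.AtPrime P.asIdeal)))
    (x : FractionRing A) (hx : IsIntegral A x) (j : A) (hj : j ∈ J) :
    ∃ n : ℕ, ∃ s ∈ P.asIdeal.primeCompl, ∃ r : A,
      algebraMap A (FractionRing A) (s * j ^ n) * x = algebraMap A (FractionRing A) r := by
  rw [PrimeSpectrum.zeroLocus_subset_zeroLocus_iff] at h
  obtain ⟨n, hn⟩ := h (Ideal.mem_map_of_mem _ hj)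
  let f : A →+* (FractionRing (Localization.AtPrime P.asIdeal)) := (algebraMap (Localization.AtPrime P.asIdeal) (FractionRing (Localization.AtPrime P.asIdeal))).comp (algebraMap A (Localization.AtPrime P.asIdeal))
  have hunit : ∀ d : A⁰, IsUnit (f d) := by
    intro d
    exact IsLocalization.map_units (FractionRing (Localization.AtPrime P.asIdeal))
      (⟨_, IsLocalization.map_nonZeroDivisors_le P.asIdeal.primeCompl (Localization.AtPrime P.asIdeal)
        (Submonoid.mem_map_of_mem _ d.2)⟩ : nonZeroDivisors (Localization.AtPrime P.asIdeal))
  let φ : (FractionRing A) →+* (FractionRing (Localization.AtPrime P.asIdeal)) := IsLocalization.lift (M := A⁰) hunit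
  have hφ : ∀ r, φ (algebraMap A (FractionRing A) r) = f r := IsLocalization.lift_eq hunit
  have hint : IsIntegral (Localization.AtPrime P.asIdeal) (φ x) := by
    obtain ⟨p, hp, hpe⟩ := hx
    refine ⟨p.map (algebraMap A (Localization.AtPrime P.asIdeal)), hp.map _, ?_⟩
    have hcomp : φ.comp (algebraMap A (FractionRing A)) = f := RingHom.ext hφ
    rw [Polynomial.eval₂_map]
    change Polynomial.eval₂ f _ _ = 0
    rw [← hcomp, ← Polynomial.hom_eval₂, hpe, map_zero]
  obtain ⟨c, hc⟩ := hn (φ x) hint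
  obtain ⟨⟨c1, s⟩, hcs⟩ := IsLocalization.surj P.asIdeal.primeCompl c
  obtain ⟨⟨u, v⟩, huv⟩ := IsLocalization.surj A⁰ x
  simp only at hcs huv
  have h0 : algebraMap A (Localization.AtPrime P.asIdeal) (s * j ^ n * u - c1 * v) = 0 := by
    apply IsFractionRing.injective (Localization.AtPrime P.asIdeal) (FractionRing (Localization.AtPrime P.asIdeal))
    have e1 := congrArg φ huv
    have e2 := congrArg (algebraMap (Localization.AtPrime P.asIdeal) (FractionRing (Localization.AtPrime P.asIdeal))) hcs
    rw [map_mul, hφ, hφ] at e1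
    simp only [f, RingHom.comp_apply] at e1
    simp only [map_mul, map_sub, map_pow, map_zero] at e2 hc ⊢
    rw [← e1, ← e2, hc]
    ring
  obtain ⟨t, ht⟩ := (IsLocalization.map_eq_zero_iff P.asIdeal.primeCompl (Localization.AtPrime P.asIdeal) _).mp h0
  refine ⟨n, t * s, mul_mem t.2 s.2, t * c1, ?_⟩
  refine (IsLocalization.map_units (FractionRing A) v).mul_left_injective ?_
  have e3 := congrArg (algebraMap A (FractionRing A)) ht
  simp only [map_mul, map_sub, map_pow, map_zero] at e3 ⊢
  rw [mul_assoc, huv]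
  linear_combination e3

/-- The descent step in the Grauert-Remmert argument. -/
theorem gr_descent {A Q : Type*} [CommRing A] [CommRing Q] [Algebra A Q]
    (A' : Subalgebra A Q) (I : Ideal A') (hI : I.IsRadical)
    (hA' : A' ≤ integralClosure A Q)
    (hEnd : ∀ x : Q, (∀ j ∈ I, x * (j : Q) ∈ (fun b : A' => (b : Q)) '' I) → x ∈ A')
    (x : Q) (hx : IsIntegral A x) (k : ℕ) (h : ∀ d ∈ I ^ k, x * (d : Q) ∈ A') : x ∈ A' := by
  induction k with
  | zero => simpa using h 1 (by simp)
  | succ k ih =>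
    apply ih
    intro d hd
    have hy : IsIntegral A (x * (d : Q)) := hx.mul (hA' d.2)
    apply hEnd
    intro j hj
    have hmem : x * (d : Q) * j ∈ A' := by
      have := h (d * j) (by rw [pow_succ]; exact Ideal.mul_mem_mul hd hj)
      simpa [mul_assoc] using this
    refine ⟨⟨_, hmem⟩, ?_, rfl⟩
    obtain ⟨p, hp, hpe⟩ := hy
    -- scale the integral equation by `j`
    let z : A' := ⟨_, hmem⟩
    have hz : Polynomial.eval z ((p.map (algebraMap A A')).scaleRoots j) = 0 := by
      apply Subtype.val_injective
      change (algebraMap A' Q) _ = (algebraMap A' Q) 0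
      rw [map_zero, Polynomial.eval, Polynomial.hom_eval₂, RingHom.comp_id]
      have hzz : algebraMap A' Q z = algebraMap A' Q j * (x * (d : Q)) := mul_comm _ _
      rw [hzz, Polynomial.scaleRoots_eval₂_mul, Polynomial.eval₂_map]
      have hc : (algebraMap A' Q).comp (algebraMap A A') = algebraMap A Q := rfl
      rw [hc, hpe, mul_zero]
    apply hI
    rw [Ideal.mem_radical_iff]
    refine ⟨(p.map (algebraMap A A')).natDegree, ?_⟩
    rw [Polynomial.eval_eq_sum_range, Polynomial.natDegree_scaleRoots,
      Finset.sum_range_succ, Polynomial.coeff_scaleRoots_natDegree,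
      (hp.map (algebraMap A A')).leadingCoeff, one_mul] at hz
    have hs : ∑ i ∈ Finset.range (p.map (algebraMap A A')).natDegree,
        ((p.map (algebraMap A A')).scaleRoots j).coeff i * z ^ i ∈ I := by
      refine Ideal.sum_mem _ fun i hi => Ideal.mul_mem_right _ _ ?_
      rw [Polynomial.coeff_scaleRoots]
      exact Ideal.mul_mem_left _ _ (Ideal.pow_mem_of_mem _ hj _
        (Nat.sub_pos_of_lt (Finset.mem_range.mp hi)))
    have := neg_eq_of_add_eq_zero_right hz
    change z ^ _ ∈ I
    rw [← this]
    exact neg_mem hs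

/-- Let `A` be a reduced Noetherian ring with finite normalization,
`A ⊆ A′ ⊆ Ā` an intermediate ring, `W ⊆ Spec A`, `J` a test ideal at `W`, and
`J′ = √(J·A′)`. If every `x ∈ Q(A)` with `x·J′ ⊆ J′` lies in `A′`, then for every
`P ∈ W` the localization `A′_P` of `A′` at the multiplicative set `A ∖ P` is
integrally closed in its total ring of fractions. -/
theorem local_grauert_remmert
    (A : Type*) [CommRing A] [IsReduced A] [IsNoetherianRing A]
    [Module.Finite A (integralClosure A (FractionRing A))]
    (A' : Subalgebra A (FractionRing A))
    (hA' : A' ≤ integralClosure A (FractionRing A))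
    (W : Set (PrimeSpectrum A)) (J : Ideal A) (hJ : IsTestIdealAt A W J)
    (hEnd : ∀ x : FractionRing A,
      (∀ j ∈ (J.map (algebraMap A A')).radical,
        x * (j : FractionRing A) ∈
          (fun b : A' => (b : FractionRing A)) '' ((J.map (algebraMap A A')).radical)) →
      x ∈ A') :
    ∀ P ∈ W,
      integralClosure
          (Localization (Algebra.algebraMapSubmonoid A' P.asIdeal.primeCompl))
          (FractionRing
            (Localization (Algebra.algebraMapSubmonoid A' P.asIdeal.primeCompl)))
        = ⊥ := by
  intro P hP
  have hNoeth : IsNoetherianRing A' := by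
    have h1 : IsNoetherian A (integralClosure A (FractionRing A)) := inferInstance
    have h2 : IsNoetherian A A' :=
      isNoetherian_of_injective (Subalgebra.inclusion hA').toLinearMap
        (Subalgebra.inclusion_injective hA')
    exact isNoetherian_of_tower A h2
  have hQred : IsReduced (FractionRing A) :=
    isReduced_localizationPreserves A⁰ (FractionRing A) inferInstance
  have hred : IsReduced A' := isReduced_of_injective A'.val Subtype.val_injective
  have hfrac : IsFractionRing A' (FractionRing A) := gr_isFractionRing A'
  refine gr_closed (R := A') (Q := FractionRing A)
    (Algebra.algebraMapSubmonoid A' P.asIdeal.primeCompl) ?_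
  intro x hx
  have hAint : Algebra.IsIntegral A A' := ⟨fun z => by
    have h : IsIntegral A (A'.val z) := hA' z.2
    exact (isIntegral_algHom_iff A'.val Subtype.val_injective).mp h⟩
  have hxA : IsIntegral A x := isIntegral_trans x hx
  set I := (J.map (algebraMap A A')).radical with hI
  -- the ideal of local denominators of `x`
  let D : Ideal A' :=
    { carrier := {d | ∃ s ∈ P.asIdeal.primeCompl,
        algebraMap A (FractionRing A) s * x * (d : FractionRing A) ∈ A'}
      add_mem' := by
        rintro a b ⟨s, hs, ha⟩ ⟨t, ht, hb⟩
        refine ⟨s * t, mul_mem hs ht, ?_⟩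
        have h1 := A'.mul_mem (A'.algebraMap_mem t) ha
        have h2 := A'.mul_mem (A'.algebraMap_mem s) hb
        have h3 := A'.add_mem h1 h2
        convert h3 using 1
        rw [map_mul]
        push_cast
        ring
      zero_mem' := ⟨1, one_mem _, by simp⟩
      smul_mem' := by
        rintro c a ⟨s, hs, ha⟩
        refine ⟨s, hs, ?_⟩
        have h1 := A'.mul_mem c.2 ha
        convert h1 using 1
        rw [smul_eq_mul]
        push_cast
        ring }
  have hID : I ≤ D.radical := by
    rw [hI]
    refine Ideal.radical_le_radical_iff.mpr ?_
    rw [Ideal.map_le_iff_le_comap]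
    intro j hj
    obtain ⟨n, s, hs, r, hr⟩ := gr_conductor P J (hJ.2.2 P hP) x hxA j hj
    refine ⟨n, s, hs, ?_⟩
    have h1 := A'.algebraMap_mem r
    rw [← hr] at h1
    convert h1 using 1
    rw [map_mul, map_pow]
    push_cast
    ring
  obtain ⟨k, hk⟩ := Ideal.exists_pow_le_of_le_radical_of_fg hID (IsNoetherian.noetherian I)
  -- a uniform denominator for the finitely generated ideal `I ^ k`
  have hunif : ∃ s ∈ P.asIdeal.primeCompl, ∀ d ∈ I ^ k,
      algebraMap A (FractionRing A) s * x * (d : FractionRing A) ∈ A' := by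
    obtain ⟨F, hF⟩ := IsNoetherian.noetherian (I ^ k)
    have hFD : ∀ f : F, ∃ s ∈ P.asIdeal.primeCompl,
        algebraMap A (FractionRing A) s * x * ((f : A') : FractionRing A) ∈ A' := fun f =>
      hk (hF ▸ Submodule.subset_span f.2)
    choose σ hσ hσ' using hFD
    refine ⟨∏ f : F, σ f, prod_mem fun f _ => hσ f, ?_⟩
    intro d hd
    rw [← hF] at hd
    refine Submodule.span_induction (p := fun (d : A') _ =>
      algebraMap A (FractionRing A) (∏ f : F, σ f) * x * (d : FractionRing A) ∈ A')
      ?_ ?_ ?_ ?_ hd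
    · intro f hf
      obtain ⟨c, hc⟩ := Finset.dvd_prod_of_mem σ (Finset.mem_univ (⟨f, hf⟩ : F))
      rw [hc]
      have h1 := A'.mul_mem (A'.algebraMap_mem c) (hσ' ⟨f, hf⟩)
      convert h1 using 1
      rw [map_mul]
      ring
    · simp
    · intro a b _ _ ha hb
      have h1 := A'.add_mem ha hb
      convert h1 using 1
      push_cast
      ring
    · intro c a _ ha
      have h1 := A'.mul_mem c.2 ha
      convert h1 using 1
      rw [smul_eq_mul]
      push_cast
      ring
  obtain ⟨s, hs, hsd⟩ := hunif
  have hfinal := gr_descent A' I (Ideal.radical_isRadical _) hA' hEnd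
    (algebraMap A (FractionRing A) s * x) (isIntegral_algebraMap.mul hxA) k hsd
  exact ⟨algebraMap A A' s, Algebra.mem_algebraMapSubmonoid_of_mem ⟨s, hs⟩, ⟨_, hfinal⟩, rfl⟩
end
end

section
/- Let A be a reduced Noetherian commutative ring whose integral closure Ā in Q(A) is a finite A-module, let J ⊆ A be a radical ideal containing a non-zerodivisor, and let W ⊆ Spec(A). Then n(A,J) ≥ n(A_P, J_P) for every P ∈ W, where J_P denotes the localized ideal in A_P. Moreover, if V(J) ⊆ W or if the non-normal locus N(A) is contained in W, then n(A,J) = max over P ∈ W of n(A_P, J_P). -/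
set_option synthInstance.maxHeartbeats 1000000
set_option maxHeartbeats 1000000

open scoped nonZeroDivisors

noncomputable section

/-- Given an intermediate ring `B` with `A ⊆ B ⊆ Q(A)` and an ideal `I` of `B`, the
endomorphism ring `End_B(I) = {x ∈ Q(A) : x·I ⊆ I}`, as a subalgebra of `Q(A)`. -/
def endStep (A : Type*) [CommRing A] (B : Subalgebra A (FractionRing A))
    (I : Ideal B) : Subalgebra A (FractionRing A) where
  carrier := {x : FractionRing A | ∀ j ∈ I,
    x * (j : FractionRing A) ∈ (fun b : B => (b : FractionRing A)) '' I}
  mul_mem' := by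
    intro x y hx hy j hj
    obtain ⟨j', hj', heq⟩ := hy j hj
    rw [mul_assoc, ← heq]
    exact hx j' hj'
  one_mem' := by
    intro j hj
    exact ⟨j, hj, (one_mul _).symm⟩
  add_mem' := by
    intro x y hx hy j hj
    obtain ⟨j1, hj1, h1⟩ := hx j hj
    obtain ⟨j2, hj2, h2⟩ := hy j hj
    refine ⟨j1 + j2, I.add_mem hj1 hj2, ?_⟩
    push_cast
    rw [add_mul, ← h1, ← h2]
  zero_mem' := by
    intro j hj
    exact ⟨0, I.zero_mem, by push_cast; rw [zero_mul]⟩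
  algebraMap_mem' := by
    intro a j hj
    refine ⟨algebraMap A B a * j, I.mul_mem_left _ hj, ?_⟩
    push_cast
    rfl

/-- The Grauert–Remmert normalization chain inside `Q(A)`:
`A_0 = A` (the image of `A` in `Q(A)`), and
`A_{i+1} = End_{A_i}(√(J·A_i))`. -/
def chainRing (A : Type*) [CommRing A] (J : Ideal A) :
    ℕ → Subalgebra A (FractionRing A)
  | 0 => ⊥
  | n + 1 =>
      endStep A (chainRing A J n)
        ((J.map (algebraMap A (chainRing A J n))).radical)

/-- The number of steps of the Grauert–Remmert-type normalization algorithm: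
the least `n` with `A_n = A_{n+1}`. -/
def nSteps (A : Type*) [CommRing A] (J : Ideal A) : ℕ :=
  sInf {n | chainRing A J n = chainRing A J (n + 1)}

/-- The non-normal locus of `A`. -/
def nonNormalLocus (A : Type*) [CommRing A] : Set (PrimeSpectrum A) :=
  {P | integralClosure (Localization.AtPrime P.asIdeal)
      (FractionRing (Localization.AtPrime P.asIdeal)) ≠ ⊥}


section Helpers

variable {A : Type*} [CommRing A]

theorem mem_map_iff_smul (J : Ideal A) (B : Subalgebra A (FractionRing A)) (b : B) :
    b ∈ J.map (algebraMap A B) ↔ (b : FractionRing A) ∈ J • Subalgebra.toSubmodule B := by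
  constructor
  · intro h
    induction h using Submodule.span_induction with
    | mem x hx =>
      obtain ⟨a, ha, rfl⟩ := hx
      have := Submodule.smul_mem_smul (I := J) (N := Subalgebra.toSubmodule B) ha
        (show (1 : FractionRing A) ∈ Subalgebra.toSubmodule B from B.one_mem)
      rwa [← Algebra.algebraMap_eq_smul_one] at this
    | zero => exact Submodule.zero_mem _
    | add x y _ _ hx hy => exact Submodule.add_mem _ hx hy
    | smul c x _ hx =>
      have : ∀ y ∈ J • Subalgebra.toSubmodule B,
          (c : FractionRing A) * y ∈ J • Subalgebra.toSubmodule B := by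
        intro y hy
        induction hy using Submodule.smul_induction_on' with
        | smul r hr n hn =>
          rw [mul_smul_comm]
          exact Submodule.smul_mem_smul hr (B.mul_mem c.2 hn)
        | add x _ y _ hx hy =>
          rw [mul_add]
          exact Submodule.add_mem _ hx hy
      exact this _ hx
  · intro h
    have key : ∀ y ∈ J • Subalgebra.toSubmodule B,
        ∃ c ∈ J.map (algebraMap A B), (c : FractionRing A) = y := by
      intro y hy
      induction hy using Submodule.smul_induction_on' with
      | smul r hr n hn =>
        refine ⟨algebraMap A B r * ⟨n, hn⟩,
          Ideal.mul_mem_right _ _ (Ideal.mem_map_of_mem _ hr), ?_⟩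
        rw [Algebra.smul_def]
        rfl
      | add x _ y _ hx hy =>
        obtain ⟨c, hc, rfl⟩ := hx
        obtain ⟨d, hd, rfl⟩ := hy
        exact ⟨c + d, Ideal.add_mem _ hc hd, rfl⟩
    obtain ⟨c, hc, hcb⟩ := key _ h
    rwa [← Subtype.ext hcb]

/-- The radical of `J·B`, as an `A`-submodule of `Q(A)`. -/
def radSub (J : Ideal A) (B : Subalgebra A (FractionRing A)) :
    Submodule A (FractionRing A) :=
  (((J.map (algebraMap A B)).radical).restrictScalars A).map B.val.toLinearMap

theorem mem_radSub (J : Ideal A) (B : Subalgebra A (FractionRing A)) (y : FractionRing A) :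
    y ∈ radSub J B ↔ y ∈ B ∧ ∃ k : ℕ, y ^ k ∈ J • Subalgebra.toSubmodule B := by
  constructor
  · rintro ⟨b, ⟨k, hk⟩, rfl⟩
    refine ⟨b.2, k, ?_⟩
    rw [mem_map_iff_smul] at hk
    exact hk
  · rintro ⟨hy, k, hk⟩
    refine ⟨⟨y, hy⟩, ⟨k, ?_⟩, rfl⟩
    rw [mem_map_iff_smul]
    exact hk

theorem mem_chain_succ (J : Ideal A) (n : ℕ) (x : FractionRing A) :
    x ∈ chainRing A J (n + 1) ↔
      ∀ y ∈ radSub J (chainRing A J n), x * y ∈ radSub J (chainRing A J n) := by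
  constructor
  · rintro h _ ⟨b, hb, rfl⟩
    obtain ⟨c, hc, h2⟩ := h b hb
    exact ⟨c, hc, h2⟩
  · intro h j hj
    obtain ⟨c, hc, h2⟩ := h j ⟨j, hj, rfl⟩
    exact ⟨c, hc, h2⟩

theorem chain_le_succ (J : Ideal A) (n : ℕ) :
    chainRing A J n ≤ chainRing A J (n + 1) := by
  intro x hx j hj
  exact ⟨⟨x, hx⟩ * j, Ideal.mul_mem_left _ _ hj, rfl⟩

theorem chain_stable (J : Ideal A) {n : ℕ} (h : chainRing A J n = chainRing A J (n + 1))
    {m : ℕ} (hm : n ≤ m) : chainRing A J m = chainRing A J (m + 1) := by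
  induction m, hm using Nat.le_induction with
  | base => exact h
  | succ m _ ih =>
    ext x
    rw [mem_chain_succ J (m + 1), mem_chain_succ J m, ← ih]

theorem chain_top (n : ℕ) : chainRing A (⊤ : Ideal A) n = ⊥ := by
  induction n with
  | zero => rfl
  | succ n ih =>
    rw [eq_bot_iff]
    intro x hx
    rw [mem_chain_succ, ih] at hx
    have h1 : (1 : FractionRing A) ∈ radSub (⊤ : Ideal A) ⊥ := by
      rw [mem_radSub]
      refine ⟨Subalgebra.one_mem _, 1, ?_⟩
      rw [Submodule.top_smul, pow_one]
      exact Subalgebra.one_mem ⊥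
    have := hx 1 h1
    rw [mul_one, mem_radSub] at this
    exact this.1

theorem mem_radSub_of_mem (J : Ideal A) (B : Subalgebra A (FractionRing A)) {g : A}
    (hg : g ∈ J) : algebraMap A (FractionRing A) g ∈ radSub J B := by
  rw [mem_radSub]
  refine ⟨B.algebraMap_mem g, 1, ?_⟩
  have := Submodule.smul_mem_smul (I := J) (N := Subalgebra.toSubmodule B) hg
    (show (1 : FractionRing A) ∈ Subalgebra.toSubmodule B from B.one_mem)
  rw [← Algebra.algebraMap_eq_smul_one] at this
  rwa [pow_one]

theorem chain_le_integralClosure [IsNoetherianRing A]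
    [Module.Finite A (integralClosure A (FractionRing A))]
    (J : Ideal A) (hnzd : ∃ g ∈ J, g ∈ A⁰) (n : ℕ) :
    chainRing A J n ≤ integralClosure A (FractionRing A) := by
  induction n with
  | zero => exact bot_le
  | succ n ih =>
    intro x hx
    obtain ⟨g, hgJ, hg⟩ := hnzd
    rw [mem_chain_succ] at hx
    have hu : IsUnit (algebraMap A (FractionRing A) g) :=
      IsLocalization.map_units (FractionRing A) (⟨g, hg⟩ : A⁰)
    have hT : ∀ y ∈ Algebra.adjoin A {x}, ∀ r ∈ radSub J (chainRing A J n),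
        y * r ∈ radSub J (chainRing A J n) := by
      intro y hy
      induction hy using Algebra.adjoin_induction with
      | mem z hz =>
        rw [Set.mem_singleton_iff] at hz
        subst hz
        exact hx
      | algebraMap a =>
        intro r hr
        rw [← Algebra.smul_def]
        exact Submodule.smul_mem _ _ hr
      | add y z _ _ hy hz =>
        intro r hr
        rw [add_mul]
        exact Submodule.add_mem _ (hy r hr) (hz r hr)
      | mul y z _ _ hy hz =>
        intro r hr
        rw [mul_assoc]
        exact hy _ (hz r hr)
    have hT2 : ∀ y ∈ Algebra.adjoin A {x},
        y * algebraMap A (FractionRing A) g ∈ integralClosure A (FractionRing A) := by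
      intro y hy
      exact ih ((mem_radSub _ _ _).1 (hT y hy _ (mem_radSub_of_mem J _ hgJ))).1
    let f : Subalgebra.toSubmodule (Algebra.adjoin A {x}) →ₗ[A]
        Subalgebra.toSubmodule (integralClosure A (FractionRing A)) :=
      { toFun := fun y => ⟨y * algebraMap A (FractionRing A) g, hT2 y y.2⟩
        map_add' := fun y z => Subtype.ext (add_mul _ _ _)
        map_smul' := fun a y => Subtype.ext (smul_mul_assoc _ _ _) }
    have hf : Function.Injective f := by
      intro y z h
      exact Subtype.ext (hu.mul_right_cancel (congrArg Subtype.val h))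
    have hN : IsNoetherian A (integralClosure A (FractionRing A)) :=
      isNoetherian_of_isNoetherianRing_of_finite _ _
    have : IsNoetherian A (Subalgebra.toSubmodule (integralClosure A (FractionRing A))) := hN
    exact isIntegral_of_submodule_noetherian (Algebra.adjoin A {x})
      (isNoetherian_of_injective f hf) x (Algebra.self_mem_adjoin_singleton A x)

theorem submodule_fg_of_le [IsNoetherianRing A]
    [Module.Finite A (integralClosure A (FractionRing A))]
    (N : Submodule A (FractionRing A))
    (hN : N ≤ Subalgebra.toSubmodule (integralClosure A (FractionRing A))) : N.FG := by
  have h1 : IsNoetherian A (integralClosure A (FractionRing A)) :=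
    isNoetherian_of_isNoetherianRing_of_finite _ _
  have h2 : IsNoetherian A (Subalgebra.toSubmodule (integralClosure A (FractionRing A))) := h1
  exact isNoetherian_submodule.1 h2 N hN

theorem radSub_fg [IsNoetherianRing A]
    [Module.Finite A (integralClosure A (FractionRing A))]
    (J : Ideal A) (hnzd : ∃ g ∈ J, g ∈ A⁰) (n : ℕ) : (radSub J (chainRing A J n)).FG := by
  apply submodule_fg_of_le
  intro y hy
  exact chain_le_integralClosure J hnzd n ((mem_radSub _ _ _).1 hy).1

theorem exists_stable [IsNoetherianRing A]
    [Module.Finite A (integralClosure A (FractionRing A))]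
    (J : Ideal A) (hnzd : ∃ g ∈ J, g ∈ A⁰) :
    ∃ n, chainRing A J n = chainRing A J (n + 1) := by
  have h1 : IsNoetherian A (integralClosure A (FractionRing A)) :=
    isNoetherian_of_isNoetherianRing_of_finite _ _
  let N := Subalgebra.toSubmodule (integralClosure A (FractionRing A))
  have h2 : IsNoetherian A N := h1
  have hmono : Monotone (chainRing A J) := monotone_nat_of_le_succ (chain_le_succ J)
  let f : ℕ →o Submodule A N :=
    { toFun := fun n => (Subalgebra.toSubmodule (chainRing A J n)).comap N.subtype
      monotone' := fun m n h y hy => hmono h hy }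
  obtain ⟨n, hn⟩ := monotone_stabilizes_iff_noetherian.2 h2 f
  refine ⟨n, le_antisymm (chain_le_succ J n) ?_⟩
  intro x hx
  have hxi := chain_le_integralClosure J hnzd (n + 1) hx
  have h3 : (⟨x, hxi⟩ : N) ∈ f (n + 1) := hx
  rw [← hn (n + 1) (Nat.le_succ n)] at h3
  exact h3

section Loc

variable {B : Type*} [CommRing B] [Algebra A B] (S : Submonoid A) [IsLocalization S B]

/-- The canonical map `Q(A) → Q(S⁻¹A)`. -/
theorem exists_phi : ∃ φ : FractionRing A →ₐ[A] FractionRing B,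
    ∀ x, φ x = 0 → ∃ s ∈ S, s • x = 0 := by
  have hle := IsLocalization.nonZeroDivisors_le_comap S B
  let φ : FractionRing A →ₐ[A] FractionRing B :=
    IsLocalization.liftAlgHom (M := A⁰) (f := Algebra.ofId A (FractionRing B)) (by
      intro y
      have : algebraMap A (FractionRing B) y = algebraMap B (FractionRing B) (algebraMap A B y) :=
        IsScalarTower.algebraMap_apply _ _ _ _
      change IsUnit (algebraMap A (FractionRing B) y)
      rw [this]
      exact IsLocalization.map_units (FractionRing B) (⟨_, hle y.2⟩ : B⁰))
  refine ⟨φ, fun x hx => ?_⟩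
  obtain ⟨⟨a, q⟩, h⟩ := IsLocalization.surj A⁰ x
  have h' := congrArg φ h
  rw [map_mul, hx, zero_mul, AlgHom.commutes, IsScalarTower.algebraMap_apply A B] at h'
  have h0 : algebraMap A B a = 0 := by
    apply IsFractionRing.injective B (FractionRing B)
    rw [map_zero]
    exact h'.symm
  obtain ⟨s, hs⟩ := (IsLocalization.map_eq_zero_iff S B a).1 h0
  refine ⟨s, s.2, ?_⟩
  have hu : IsUnit (algebraMap A (FractionRing A) q) := IsLocalization.map_units _ q
  apply hu.mul_right_cancel
  rw [smul_mul_assoc, h, Algebra.smul_def, ← map_mul, hs, map_zero, zero_mul]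


/-- The second submodule is the localization of the first one. -/
def IsLoc (φ : FractionRing A →ₐ[A] FractionRing B) (X : Submodule A (FractionRing A))
    (X' : Submodule B (FractionRing B)) : Prop :=
  ∀ y', y' ∈ X' ↔ ∃ s ∈ S, ∃ y ∈ X, s • y' = φ y

variable (φ : FractionRing A →ₐ[A] FractionRing B)

theorem smul_mem_cancel (X' : Submodule B (FractionRing B)) {s : A} (hs : s ∈ S)
    {y : FractionRing B} (h : s • y ∈ X') : y ∈ X' := by
  obtain ⟨u, hu⟩ := IsLocalization.map_units B (⟨s, hs⟩ : S)
  have h2 := X'.smul_mem (↑u⁻¹ : B) h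
  rw [← algebraMap_smul B s y] at h2
  have hu : (u : B) = algebraMap A B s := hu
  rw [← hu, smul_smul, Units.inv_mul, one_smul] at h2
  exact h2

variable {S} {φ}

theorem isLoc_smul (J : Ideal A) {X : Submodule A (FractionRing A)}
    {X' : Submodule B (FractionRing B)} (h : IsLoc S φ X X') :
    IsLoc S φ (J • X) (J.map (algebraMap A B) • X') := by
  intro y'
  constructor
  · intro hy
    induction hy using Submodule.smul_induction_on' with
    | smul r hr n hn =>
      obtain ⟨⟨j, t⟩, hj⟩ := (IsLocalization.mem_map_algebraMap_iff S B).1 hr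
      obtain ⟨s, hs, y, hy, hsy⟩ := (h n).1 hn
      refine ⟨t * s, S.mul_mem t.2 hs, (j : A) • y, Submodule.smul_mem_smul j.2 hy, ?_⟩
      rw [map_smul, ← hsy, mul_smul, ← algebraMap_smul B (j : A), ← hj, mul_smul,
        algebraMap_smul, smul_comm s r n, smul_comm (t : A) r]
    | add x _ y _ hx hy =>
      obtain ⟨s, hs, x1, hx1, h1⟩ := hx
      obtain ⟨t, ht, y1, hy1, h2⟩ := hy
      refine ⟨s * t, S.mul_mem hs ht, t • x1 + s • y1, Submodule.add_mem _
        (Submodule.smul_mem _ _ hx1) (Submodule.smul_mem _ _ hy1), ?_⟩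
      rw [map_add, map_smul, map_smul, ← h1, ← h2, smul_add, smul_smul, smul_smul, mul_comm t s]
  · rintro ⟨s, hs, y, hy, hsy⟩
    apply smul_mem_cancel S _ hs
    rw [hsy]
    clear hsy
    induction hy using Submodule.smul_induction_on' with
    | smul r hr n hn =>
      rw [map_smul, ← algebraMap_smul B r]
      refine Submodule.smul_mem_smul (Ideal.mem_map_of_mem _ hr) ?_
      exact (h _).2 ⟨1, S.one_mem, n, hn, one_smul _ _⟩
    | add x _ y _ hx hy =>
      rw [map_add]
      exact Submodule.add_mem _ hx hy

theorem isLoc_radSub (hφ : ∀ x, φ x = 0 → ∃ s ∈ S, s • x = 0)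
    (J : Ideal A) {X : Subalgebra A (FractionRing A)}
    {X' : Subalgebra B (FractionRing B)}
    (h : IsLoc S φ (Subalgebra.toSubmodule X) (Subalgebra.toSubmodule X')) :
    IsLoc S φ (radSub J X) (radSub (J.map (algebraMap A B)) X') := by
  have hJ := isLoc_smul J h
  intro y'
  constructor
  · intro hy
    obtain ⟨hy1, k, hk⟩ := (mem_radSub _ _ _).1 hy
    obtain ⟨s, hs, y, hyX, e1⟩ := (h y').1 hy1
    obtain ⟨t, ht, z, hz, e2⟩ := (hJ _).1 hk
    have e3 : φ (t • y ^ k - s ^ k • z) = 0 := by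
      rw [map_sub, map_smul, map_smul, map_pow, ← e1, ← e2, smul_pow, smul_comm, sub_self]
    obtain ⟨w, hw, e4⟩ := hφ _ e3
    rw [smul_sub, sub_eq_zero] at e4
    refine ⟨w * t * s, S.mul_mem (S.mul_mem hw ht) hs, (w * t) • y, ?_, ?_⟩
    · rw [mem_radSub]
      refine ⟨X.smul_mem hyX _, k + 1, ?_⟩
      have : ((w * t) • y) ^ (k + 1) = (w * t) ^ k • (y * (w • t • y ^ k)) := by
        simp only [Algebra.smul_def, map_mul, map_pow]
        ring
      rw [this, e4]
      apply Submodule.smul_mem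
      rw [mul_smul_comm, mul_smul_comm]
      apply Submodule.smul_mem
      apply Submodule.smul_mem
      clear this e4 e3 e2
      induction hz using Submodule.smul_induction_on' with
      | smul r hr n hn =>
        rw [mul_smul_comm]
        exact Submodule.smul_mem_smul hr (X.mul_mem hyX hn)
      | add x _ y _ hx hy =>
        rw [mul_add]
        exact Submodule.add_mem _ hx hy
    · rw [mul_smul, e1, map_smul]
  · rintro ⟨s, hs, y, hy, e1⟩
    apply smul_mem_cancel S _ hs
    rw [e1]
    obtain ⟨hy1, k, hk⟩ := (mem_radSub _ _ _).1 hy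
    rw [mem_radSub]
    refine ⟨(h _).2 ⟨1, S.one_mem, y, hy1, one_smul _ _⟩, k, ?_⟩
    rw [← map_pow]
    exact (hJ _).2 ⟨1, S.one_mem, _, hk, one_smul _ _⟩

theorem exists_common (N : Submodule A (FractionRing A)) (x : FractionRing A)
    (I : Submodule A (FractionRing A)) (hI : I.FG)
    (h : ∀ y ∈ I, ∃ s ∈ S, s • (x * y) ∈ N) :
    ∃ s ∈ S, ∀ y ∈ I, s • (x * y) ∈ N := by
  induction I, hI using Submodule.fg_induction with
  | singleton y =>
    obtain ⟨s, hs, h1⟩ := h y (Submodule.mem_span_singleton_self y)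
    refine ⟨s, hs, fun z hz => ?_⟩
    obtain ⟨a, rfl⟩ := Submodule.mem_span_singleton.1 hz
    rw [mul_smul_comm, smul_comm]
    exact N.smul_mem _ h1
  | sup I1 I2 _ _ h1 h2 =>
    obtain ⟨s, hs, h3⟩ := h1 fun y hy => h y (Submodule.mem_sup_left hy)
    obtain ⟨t, ht, h4⟩ := h2 fun y hy => h y (Submodule.mem_sup_right hy)
    refine ⟨s * t, S.mul_mem hs ht, fun y hy => ?_⟩
    obtain ⟨y1, hy1, y2, hy2, rfl⟩ := Submodule.mem_sup.1 hy
    rw [mul_add, smul_add]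
    refine N.add_mem ?_ ?_
    · rw [mul_comm s t, mul_smul]
      exact N.smul_mem _ (h3 _ hy1)
    · rw [mul_smul]
      exact N.smul_mem _ (h4 _ hy2)

theorem isLoc_chain [IsNoetherianRing A]
    [Module.Finite A (integralClosure A (FractionRing A))]
    (hφ : ∀ x, φ x = 0 → ∃ s ∈ S, s • x = 0)
    (J : Ideal A) (hnzd : ∃ g ∈ J, g ∈ A⁰) (n : ℕ) :
    IsLoc S φ (Subalgebra.toSubmodule (chainRing A J n))
      (Subalgebra.toSubmodule (chainRing B (J.map (algebraMap A B)) n)) := by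
  induction n with
  | zero =>
    intro y'
    constructor
    · rintro hy
      obtain ⟨b, rfl⟩ := Algebra.mem_bot.1 hy
      obtain ⟨⟨a, s⟩, e⟩ := IsLocalization.surj S b
      refine ⟨s, s.2, algebraMap A _ a, Subalgebra.algebraMap_mem _ a, ?_⟩
      rw [AlgHom.commutes, IsScalarTower.algebraMap_apply A B, ← e, mul_comm, map_mul,
        Algebra.smul_def, IsScalarTower.algebraMap_apply A B]
    · rintro ⟨s, hs, y, hy, e⟩
      obtain ⟨a, rfl⟩ := Algebra.mem_bot.1 hy
      apply smul_mem_cancel S _ hs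
      rw [e, AlgHom.commutes, IsScalarTower.algebraMap_apply A B]
      exact Subalgebra.algebraMap_mem _ _
  | succ n ih =>
    have hR := isLoc_radSub hφ J ih
    have hfg := radSub_fg J hnzd n
    intro x'
    constructor
    · intro hx
      have hx := (mem_chain_succ _ _ _).1 hx
      obtain ⟨g, hgJ, hg⟩ := hnzd
      have hu : IsUnit (algebraMap A (FractionRing A) g) :=
        IsLocalization.map_units (FractionRing A) (⟨g, hg⟩ : A⁰)
      have h1 := hx _ (mem_radSub_of_mem (J.map (algebraMap A B)) _
        (Ideal.mem_map_of_mem _ hgJ))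
      obtain ⟨s, hs, j, hj, e⟩ := (hR _).1 h1
      obtain ⟨x, hxj⟩ : ∃ x, x * algebraMap A (FractionRing A) g = j := by
        obtain ⟨u, hu⟩ := hu
        refine ⟨j * ↑u⁻¹, ?_⟩
        rw [← hu, mul_assoc, Units.inv_mul, mul_one]
      have e2 : s • x' = φ x := by
        apply (hu.map φ).mul_right_cancel
        rw [← map_mul, hxj, ← e, AlgHom.commutes, smul_mul_assoc,
          IsScalarTower.algebraMap_apply A B]
      obtain ⟨t, ht, h3⟩ := exists_common (S := S) (radSub J (chainRing A J n)) x _ hfg (by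
        intro y hy
        have h4 := hx (φ y) ((hR _).2 ⟨1, S.one_mem, y, hy, one_smul _ _⟩)
        obtain ⟨t, ht, z, hz, e3⟩ := (hR _).1 h4
        have e4 : φ (t • (x * y) - s • z) = 0 := by
          rw [map_sub, map_smul, map_smul, map_mul, ← e2, ← e3, smul_mul_assoc, smul_comm,
            sub_self]
        obtain ⟨w, hw, e5⟩ := hφ _ e4
        rw [smul_sub, sub_eq_zero] at e5
        refine ⟨w * t, S.mul_mem hw ht, ?_⟩
        rw [mul_smul, e5]
        exact Submodule.smul_mem _ _ (Submodule.smul_mem _ _ hz))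
      refine ⟨t * s, S.mul_mem ht hs, t • x, ?_, ?_⟩
      · apply (mem_chain_succ _ _ _).2
        intro y hy
        rw [smul_mul_assoc]
        exact h3 y hy
      · rw [mul_smul, e2, map_smul]
    · rintro ⟨s, hs, x, hx, e⟩
      apply smul_mem_cancel S _ hs
      rw [e]
      have hx := (mem_chain_succ _ _ _).1 hx
      apply (mem_chain_succ _ _ _).2
      intro y' hy'
      obtain ⟨t, ht, y, hy, e2⟩ := (hR _).1 hy'
      refine (hR _).2 ⟨t, ht, x * y, hx y hy, ?_⟩
      rw [map_mul, ← e2, mul_smul_comm]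

theorem chain_loc_eq [IsNoetherianRing A]
    [Module.Finite A (integralClosure A (FractionRing A))]
    (hφ : ∀ x, φ x = 0 → ∃ s ∈ S, s • x = 0)
    (J : Ideal A) (hnzd : ∃ g ∈ J, g ∈ A⁰) {m n : ℕ}
    (h : chainRing A J m = chainRing A J n) :
    chainRing B (J.map (algebraMap A B)) m = chainRing B (J.map (algebraMap A B)) n := by
  ext x
  have h1 := isLoc_chain hφ J hnzd m x
  have h2 := isLoc_chain hφ J hnzd n x
  rw [h] at h1
  exact h1.trans h2.symm

theorem chain_loc_le_integralClosure [IsNoetherianRing A]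
    [Module.Finite A (integralClosure A (FractionRing A))]
    (hφ : ∀ x, φ x = 0 → ∃ s ∈ S, s • x = 0)
    (J : Ideal A) (hnzd : ∃ g ∈ J, g ∈ A⁰) (n : ℕ) :
    chainRing B (J.map (algebraMap A B)) n ≤ integralClosure B (FractionRing B) := by
  intro x' hx'
  obtain ⟨s, hs, x, hx, e⟩ := (isLoc_chain hφ J hnzd n x').1 hx'
  apply smul_mem_cancel S (Subalgebra.toSubmodule (integralClosure B (FractionRing B))) hs
  rw [e]
  have h1 : IsIntegral A x := chain_le_integralClosure J hnzd n hx
  have h2 : IsIntegral A (φ x) := h1.map φ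
  exact h2.tower_top

theorem exists_smul_mem [IsNoetherianRing A]
    [Module.Finite A (integralClosure A (FractionRing A))]
    (hφ : ∀ x, φ x = 0 → ∃ s ∈ S, s • x = 0)
    (J : Ideal A) (hnzd : ∃ g ∈ J, g ∈ A⁰) {m n : ℕ}
    (h : chainRing B (J.map (algebraMap A B)) m = chainRing B (J.map (algebraMap A B)) n)
    {x : FractionRing A} (hx : x ∈ chainRing A J n) : ∃ s ∈ S, s • x ∈ chainRing A J m := by
  have h1 : φ x ∈ chainRing B (J.map (algebraMap A B)) n :=
    (isLoc_chain hφ J hnzd n _).2 ⟨1, S.one_mem, x, hx, one_smul _ _⟩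
  rw [← h] at h1
  obtain ⟨s, hs, y, hy, e⟩ := (isLoc_chain hφ J hnzd m _).1 h1
  have e4 : φ (s • x - y) = 0 := by rw [map_sub, map_smul, e, sub_self]
  obtain ⟨w, hw, e5⟩ := hφ _ e4
  rw [smul_sub, sub_eq_zero] at e5
  refine ⟨w * s, S.mul_mem hw hs, ?_⟩
  rw [mul_smul, e5]
  exact Subalgebra.smul_mem _ hy _
end Loc

end Helpers

/-- Let `A` be a reduced Noetherian ring with finite normalization,
`J ⊆ A` a radical ideal containing a non-zerodivisor, and `W ⊆ Spec A`. Then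
`n(A,J) ≥ n(A_P, J_P)` for every `P ∈ W`; moreover if `V(J) ⊆ W` or `N(A) ⊆ W`, then
`n(A,J) = max_{P ∈ W} n(A_P, J_P)`. -/
theorem nSteps_localization
    (A : Type*) [CommRing A] [IsReduced A] [IsNoetherianRing A]
    [Module.Finite A (integralClosure A (FractionRing A))]
    (J : Ideal A) (hrad : J.IsRadical) (hnzd : ∃ g ∈ J, g ∈ A⁰)
    (W : Set (PrimeSpectrum A)) :
    (∀ P ∈ W,
        nSteps (Localization.AtPrime P.asIdeal)
            (J.map (algebraMap A (Localization.AtPrime P.asIdeal)))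
          ≤ nSteps A J) ∧
      ((PrimeSpectrum.zeroLocus (J : Set A) ⊆ W ∨ nonNormalLocus A ⊆ W) →
        nSteps A J = sSup {m : ℕ | ∃ P ∈ W,
          m = nSteps (Localization.AtPrime P.asIdeal)
                (J.map (algebraMap A (Localization.AtPrime P.asIdeal)))}) := by
  have hst := exists_stable J hnzd
  have hN : chainRing A J (nSteps A J) = chainRing A J (nSteps A J + 1) := Nat.sInf_mem hst
  have hloc : ∀ P : PrimeSpectrum A,
      chainRing (Localization.AtPrime P.asIdeal)
        (J.map (algebraMap A (Localization.AtPrime P.asIdeal))) (nSteps A J) =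
      chainRing (Localization.AtPrime P.asIdeal)
        (J.map (algebraMap A (Localization.AtPrime P.asIdeal))) (nSteps A J + 1) := by
    intro P
    obtain ⟨φ, hφ⟩ := exists_phi (B := Localization.AtPrime P.asIdeal) P.asIdeal.primeCompl
    exact chain_loc_eq hφ J hnzd hN
  have hle : ∀ P : PrimeSpectrum A, nSteps (Localization.AtPrime P.asIdeal)
      (J.map (algebraMap A (Localization.AtPrime P.asIdeal))) ≤ nSteps A J :=
    fun P => Nat.sInf_le (hloc P)
  refine ⟨fun P _ => hle P, fun hW => ?_⟩
  set T := {m : ℕ | ∃ P ∈ W, m = nSteps (Localization.AtPrime P.asIdeal)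
                (J.map (algebraMap A (Localization.AtPrime P.asIdeal)))} with hT
  have hub : ∀ m ∈ T, m ≤ nSteps A J := by
    rintro m ⟨P, _, rfl⟩
    exact hle P
  refine le_antisymm ?_ (csSup_le' hub)
  refine Nat.sInf_le ?_
  have hlocM : ∀ P : PrimeSpectrum A,
      chainRing (Localization.AtPrime P.asIdeal)
        (J.map (algebraMap A (Localization.AtPrime P.asIdeal))) (sSup T) =
      chainRing (Localization.AtPrime P.asIdeal)
        (J.map (algebraMap A (Localization.AtPrime P.asIdeal))) (sSup T + 1) := by
    intro P
    by_cases hP : P ∈ W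
    · have h1 : chainRing (Localization.AtPrime P.asIdeal)
          (J.map (algebraMap A (Localization.AtPrime P.asIdeal)))
          (nSteps (Localization.AtPrime P.asIdeal)
            (J.map (algebraMap A (Localization.AtPrime P.asIdeal)))) = _ :=
        Nat.sInf_mem (s := {n | chainRing (Localization.AtPrime P.asIdeal)
          (J.map (algebraMap A (Localization.AtPrime P.asIdeal))) n = chainRing _ _ (n + 1)})
          ⟨_, hloc P⟩
      exact chain_stable _ h1 (le_csSup ⟨_, hub⟩ ⟨P, hP, rfl⟩)
    · rcases hW with hW | hW
      · have h1 : ¬ J ≤ P.asIdeal := fun h => hP (hW h)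
        obtain ⟨a, haJ, haP⟩ := Set.not_subset.1 h1
        have h2 : J.map (algebraMap A (Localization.AtPrime P.asIdeal)) = ⊤ :=
          Ideal.eq_top_of_isUnit_mem _ (Ideal.mem_map_of_mem _ haJ)
            (IsLocalization.map_units (M := P.asIdeal.primeCompl) _ ⟨a, haP⟩)
        rw [h2, chain_top, chain_top]
      · have h1 : integralClosure (Localization.AtPrime P.asIdeal)
            (FractionRing (Localization.AtPrime P.asIdeal)) = ⊥ := by
          by_contra h
          exact hP (hW h)
        obtain ⟨φ, hφ⟩ := exists_phi (B := Localization.AtPrime P.asIdeal) P.asIdeal.primeCompl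
        have h2 := fun n => chain_loc_le_integralClosure hφ J hnzd n
        rw [h1] at h2
        rw [le_bot_iff.1 (h2 _), le_bot_iff.1 (h2 _)]
  refine le_antisymm (chain_le_succ J _) fun x hx => ?_
  let I : Ideal A := (Subalgebra.toSubmodule (chainRing A J (sSup T))).comap
    (LinearMap.toSpanSingleton A (FractionRing A) x)
  have hI : I = ⊤ := by
    by_contra h
    obtain ⟨m, hm, hIm⟩ := Ideal.exists_le_maximal I h
    let P : PrimeSpectrum A := ⟨m, hm.isPrime⟩
    obtain ⟨φ, hφ⟩ := exists_phi (B := Localization.AtPrime P.asIdeal) P.asIdeal.primeCompl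
    obtain ⟨s, hs, h3⟩ := exists_smul_mem hφ J hnzd (hlocM P) hx
    exact hs (hIm h3)
  have h1 : (1 : A) ∈ I := hI ▸ Submodule.mem_top
  have h2 : (1 : A) • x ∈ chainRing A J (sSup T) := h1
  rwa [one_smul] at h2
end
end

section
/- Let A be a reduced Noetherian commutative ring satisfying Serre's condition (S_2), and let J ⊆ A be a radical ideal containing a non-zerodivisor of A. Then the ring End_A(J) = {x ∈ Q(A) : x·J ⊆ J} ⊆ Q(A) satisfies Serre's condition (S_2). -/
set_option synthInstance.maxHeartbeats 1000000
set_option maxHeartbeats 1000000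

open scoped nonZeroDivisors

noncomputable section

/-- For an ideal `J ⊆ A`, the endomorphism ring
`End_A(J) = {x ∈ Q(A) : x·J ⊆ J}` as a subalgebra of `Q(A)`. -/
def endIdeal (A : Type*) [CommRing A] (J : Ideal A) :
    Subalgebra A (FractionRing A) where
  carrier := {x : FractionRing A | ∀ j ∈ J,
    x * algebraMap A (FractionRing A) j ∈ algebraMap A (FractionRing A) '' J}
  mul_mem' := by
    intro x y hx hy j hj
    obtain ⟨j', hj', heq⟩ := hy j hj
    rw [mul_assoc, ← heq]
    exact hx j' hj'
  one_mem' := by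
    intro j hj
    exact ⟨j, hj, (one_mul _).symm⟩
  add_mem' := by
    intro x y hx hy j hj
    obtain ⟨j1, hj1, h1⟩ := hx j hj
    obtain ⟨j2, hj2, h2⟩ := hy j hj
    refine ⟨j1 + j2, J.add_mem hj1 hj2, ?_⟩
    rw [map_add, add_mul, ← h1, ← h2]
  zero_mem' := by
    intro j hj
    exact ⟨0, J.zero_mem, by rw [map_zero, zero_mul]⟩
  algebraMap_mem' := by
    intro a j hj
    exact ⟨a * j, J.mul_mem_left a hj, by rw [map_mul]⟩

/-- Serre's condition `(S₂)`: for every prime `P`, `depth A_P ≥ min (2, dim A_P)`,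
expressed by the existence of regular sequences in the maximal ideal of `A_P` of
length `min (2, dim A_P)`. -/
def SerreS2 (A : Type*) [CommRing A] : Prop :=
  ∀ P : PrimeSpectrum A, ∀ n : ℕ, n ≤ 2 →
    (n : WithBot ℕ∞) ≤ ringKrullDim (Localization.AtPrime P.asIdeal) →
    ∃ rs : List (Localization.AtPrime P.asIdeal), rs.length = n ∧
      (∀ r ∈ rs, r ∈ IsLocalRing.maximalIdeal (Localization.AtPrime P.asIdeal)) ∧
      RingTheory.Sequence.IsRegular (Localization.AtPrime P.asIdeal) rs

lemma S2aux.exists_nzd {R : Type*} [CommRing R] [IsReduced R] [IsNoetherianRing R]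
    (p : Ideal R) [p.IsPrime] (h : 1 ≤ p.height) : ∃ x ∈ p, x ∈ R⁰ := by
  have hfin : (minimalPrimes R).Finite := minimalPrimes.finite_of_isNoetherianRing R
  have hn : ¬ ((p : Set R) ⊆ ⋃ q ∈ minimalPrimes R, ((id q : Ideal R) : Set R)) := by
    intro hsub
    obtain ⟨q, hq, hpq⟩ := (Ideal.subset_union_prime_finite hfin (f := id) 0 0
      (fun i hi _ _ => hi.1.1)).mp hsub
    have : p = q := le_antisymm hpq (hq.2 ⟨inferInstance, bot_le⟩ hpq)
    subst this
    have : p.height = 0 := by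
      rwa [Ideal.height_eq_zero_iff]
    rw [this] at h
    exact absurd h (by simp)
  rw [Set.not_subset] at hn
  obtain ⟨x, hxp, hx⟩ := hn
  refine ⟨x, hxp, ?_⟩
  rw [mem_nonZeroDivisors_iff_right]
  intro y hy
  have h0 : y ∈ sInf (minimalPrimes R) := by
    rw [Ideal.mem_sInf]
    intro q hq
    have := hq.1.1
    have hm : y * x ∈ q := by rw [hy]; exact q.zero_mem
    refine (this.mem_or_mem hm).resolve_right fun h => hx ?_
    simp only [Set.mem_iUnion]
    exact ⟨q, hq, h⟩
  have h1 : sInf (minimalPrimes R) = (⊥ : Ideal R) := by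
    rw [minimalPrimes, Ideal.sInf_minimalPrimes]
    exact (nilradical_eq_zero R)
  simpa [h1] using h0

lemma S2aux.height_le {R S : Type*} [CommRing R] [CommRing S] [Algebra R S]
    [Algebra.IsIntegral R S] (Q : Ideal S) [Q.IsPrime] :
    Q.height ≤ (Q.comap (algebraMap R S)).height := by
  have := Order.height_le_height_apply_of_strictMono
    (fun q : PrimeSpectrum S => PrimeSpectrum.comap (algebraMap R S) q)
    (fun a b hab => by
      have := Ideal.IsIntegral.comap_lt_comap (R := R) (I := a.asIdeal) (J := b.asIdeal) hab
      exact this) ⟨Q, inferInstance⟩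
  rw [← PrimeSpectrum.height_eq_orderHeight, ← PrimeSpectrum.height_eq_orderHeight] at this
  exact this

/-- Regular pair unfolded. -/
lemma S2aux.pair_iff {R : Type*} [CommRing R] (x y : R) :
    RingTheory.Sequence.IsWeaklyRegular R [x, y] ↔
      x ∈ R⁰ ∧ ∀ a b, y * a = x * b → ∃ c, a = x * c := by
  rw [RingTheory.Sequence.isWeaklyRegular_cons_iff,
    RingTheory.Sequence.isWeaklyRegular_singleton_iff,
    isSMulRegular_quotient_iff_mem_of_smul_mem]
  refine and_congr ?_ ?_
  · rw [isSMulRegular_iff_right_eq_zero_of_smul, mem_nonZeroDivisors_iff_right]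
    simp [mul_comm]
  · simp only [Submodule.mem_smul_pointwise_iff_exists, smul_eq_mul]
    constructor
    · intro h a b hab
      obtain ⟨c, _, hc⟩ := h a ⟨b, trivial, hab.symm⟩
      exact ⟨c, hc.symm⟩
    · rintro h a ⟨b, _, hb⟩
      obtain ⟨c, hc⟩ := h a b hb.symm
      exact ⟨c, trivial, hc.symm⟩

/-- Existence of a second regular element. -/
lemma S2aux.exists_second {R : Type*} [CommRing R] [IsLocalRing R] [IsNoetherianRing R] (x : R)
    (h : ∀ a : R, (∀ m ∈ IsLocalRing.maximalIdeal R, ∃ b, m * a = x * b) → ∃ c, a = x * c) :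
    ∃ y ∈ IsLocalRing.maximalIdeal R, ∀ a b, y * a = x * b → ∃ c, a = x * c := by
  by_contra! hcon
  let M := R ⧸ (Ideal.span {x})
  have hsub : ((IsLocalRing.maximalIdeal R : Ideal R) : Set R) ⊆
      ⋃ p ∈ associatedPrimes R M, ((id p : Ideal R) : Set R) := by
    intro y hy
    have h2 := biUnion_associatedPrimes_eq_compl_regular R M
    simp only [id]
    rw [h2]
    intro hreg
    obtain ⟨a, b, hab, hc⟩ := hcon y hy
    have := mem_of_isSMulRegular_quotient_of_smul_mem (N := Ideal.span {x}) (x := a) hreg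
      (by rw [smul_eq_mul, hab]; exact Ideal.mul_mem_right _ _ (Ideal.mem_span_singleton_self x))
    obtain ⟨c, hc'⟩ := Ideal.mem_span_singleton'.mp this
    exact hc c (by rw [← hc', mul_comm])
  obtain ⟨q, hq, hle⟩ := (Ideal.subset_union_prime_finite (associatedPrimes.finite R M)
    (f := id) 0 0 (fun i hi _ _ => hi.1)).mp hsub
  obtain ⟨hqp, m, hm⟩ := isAssociatedPrime_iff.mp hq
  obtain ⟨a, rfl⟩ := Submodule.mkQ_surjective _ m
  obtain ⟨c, hc⟩ := h a (fun m hmm => by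
    have h3 := hle hmm
    simp only [id] at h3
    rw [hm, Submodule.mem_colon_singleton, ← map_smul, Submodule.mem_bot, Submodule.mkQ_apply,
      Submodule.Quotient.mk_eq_zero] at h3
    obtain ⟨b, hb⟩ := Ideal.mem_span_singleton'.mp h3
    exact ⟨b, by rw [mul_comm x, hb]; rfl⟩)
  apply hqp.ne_top
  rw [hm, Ideal.eq_top_iff_one, Submodule.mem_colon_singleton, one_smul, Submodule.mem_bot,
    Submodule.mkQ_apply, Submodule.Quotient.mk_eq_zero, hc]
  exact Ideal.mul_mem_right _ _ (Ideal.mem_span_singleton_self x)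

/-- The depth-two property of `A_p`, written with fractions. -/
lemma S2aux.star {A : Type*} [CommRing A] (p : Ideal A) [p.IsPrime]
    (rs : List (Localization.AtPrime p)) (hlen : rs.length = 2)
    (hm : ∀ r ∈ rs, r ∈ IsLocalRing.maximalIdeal (Localization.AtPrime p))
    (hreg : RingTheory.Sequence.IsRegular (Localization.AtPrime p) rs)
    (z : FractionRing A)
    (hz : ∀ a ∈ p, ∃ b : A, z * algebraMap A (FractionRing A) a = algebraMap A _ b) :
    ∃ s ∉ p, ∃ b : A, z * algebraMap A (FractionRing A) s = algebraMap A _ b := by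
  obtain ⟨X, Y, rfl⟩ := List.length_eq_two.mp hlen
  obtain ⟨hX, hXY⟩ := (S2aux.pair_iff X Y).mp hreg.1
  obtain ⟨⟨a, d⟩, hzd⟩ := IsLocalization.surj A⁰ z
  simp only at hzd
  have hinj : Function.Injective (algebraMap A (FractionRing A)) :=
    IsLocalization.injective _ le_rfl
  let L := Localization.AtPrime p
  have hdL : algebraMap A L d ∈ L⁰ :=
    IsLocalization.map_nonZeroDivisors_le p.primeCompl L ⟨d, d.2, rfl⟩
  have key : ∀ W ∈ IsLocalRing.maximalIdeal L, ∃ u, W * algebraMap A L a = algebraMap A L d * u := by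
    intro W hW
    obtain ⟨w, s, rfl⟩ := IsLocalization.exists_mk'_eq p.primeCompl W
    have hw : w ∈ p := (IsLocalization.AtPrime.mk'_mem_maximal_iff L p w s).mp hW
    obtain ⟨b, hb⟩ := hz w hw
    have h1 : w * a = d * b := by
      apply hinj
      rw [map_mul, map_mul, ← hb, ← hzd]; ring
    refine ⟨IsLocalization.mk' L b s, ?_⟩
    rw [mul_comm, IsLocalization.mul_mk'_eq_mk'_of_mul, IsLocalization.mul_mk'_eq_mk'_of_mul,
      mul_comm a, h1]
  obtain ⟨u, hu⟩ := key X (hm X (by simp))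
  obtain ⟨v, hv⟩ := key Y (hm Y (by simp))
  have h1 : Y * u = X * v := by
    apply (mul_cancel_left_mem_nonZeroDivisors hdL).mp
    calc _ = Y * (algebraMap A L d * u) := by ring
      _ = X * (algebraMap A L d * v) := by rw [← hu, ← hv]; ring
      _ = _ := by ring
  obtain ⟨w, rfl⟩ := hXY u v h1
  have h2 : algebraMap A L a = algebraMap A L d * w := by
    apply (mul_cancel_left_mem_nonZeroDivisors hX).mp
    rw [hu]; ring
  obtain ⟨c, s, rfl⟩ := IsLocalization.exists_mk'_eq p.primeCompl w
  have h3 : algebraMap A L (s * a) = algebraMap A L (d * c) := by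
    rw [map_mul, map_mul, h2, mul_left_comm, IsLocalization.mk'_spec']
  obtain ⟨t, ht⟩ := (IsLocalization.eq_iff_exists p.primeCompl L).mp h3
  refine ⟨t * s, (t * s).2, t * c, ?_⟩
  have hdF : algebraMap A (FractionRing A) d ∈ (FractionRing A)⁰ :=
    (IsLocalization.map_units (FractionRing A) d).mem_nonZeroDivisors
  apply (mul_cancel_left_mem_nonZeroDivisors hdF).mp
  calc _ = z * algebraMap A (FractionRing A) d * algebraMap A (FractionRing A) (t * s) := by ring
    _ = algebraMap A (FractionRing A) (t * (s * a)) := by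
        rw [hzd, ← map_mul]; congr 1; ring
    _ = _ := by rw [ht, ← map_mul]; congr 1; ring

lemma S2aux.claim {A : Type*} [CommRing A] [IsNoetherianRing A] (J : Ideal A) (hrad : J.IsRadical)
    (p : Ideal A) [hp : p.IsPrime]
    (H : ∀ z : FractionRing A,
      (∀ a ∈ p, ∃ b : A, z * algebraMap A (FractionRing A) a = algebraMap A _ b) →
      ∃ s ∉ p, ∃ b : A, z * algebraMap A (FractionRing A) s = algebraMap A _ b)
    (z : FractionRing A)
    (hz : ∀ a ∈ p, z * algebraMap A (FractionRing A) a ∈ endIdeal A J) :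
    ∃ s ∉ p, z * algebraMap A (FractionRing A) s ∈ endIdeal A J := by
  have hinj : Function.Injective (algebraMap A (FractionRing A)) :=
    IsLocalization.injective _ le_rfl
  -- Step 1: a common denominator for `z J`.
  have step1 : ∃ s ∉ p, ∀ j ∈ J, ∃ b : A,
      z * algebraMap A (FractionRing A) s * algebraMap A (FractionRing A) j
        = algebraMap A _ b := by
    have hfg : J.FG := IsNoetherian.noetherian J
    obtain ⟨S, hS⟩ := hfg
    have h1 : ∀ j ∈ J, ∃ s ∉ p, ∃ b : A,
        z * algebraMap A (FractionRing A) j * algebraMap A (FractionRing A) s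
          = algebraMap A _ b := by
      intro j hj
      apply H
      intro a ha
      obtain ⟨b, _, hb⟩ := hz a ha j hj
      exact ⟨b, by rw [hb]; ring⟩
    have hSJ : ∀ j ∈ S, j ∈ J := fun j hj => hS ▸ Ideal.subset_span hj
    choose! f hf g hg using h1
    refine ⟨∏ j ∈ S, f j, ?_, ?_⟩
    · intro hmem
      obtain ⟨j, hj, hjp⟩ := (Ideal.IsPrime.prod_mem_iff).mp hmem
      exact hf j (hSJ j hj) hjp
    · intro j hj
      rw [← hS] at hj
      induction hj using Submodule.span_induction with
      | mem j hj =>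
        obtain ⟨c, hc⟩ := Finset.dvd_prod_of_mem f hj
        refine ⟨g j * c, ?_⟩
        rw [hc, map_mul, map_mul, ← hg j (hSJ j hj)]; ring
      | zero => exact ⟨0, by simp⟩
      | add x y _ _ hx hy =>
        obtain ⟨b, hb⟩ := hx
        obtain ⟨c, hc⟩ := hy
        exact ⟨b + c, by rw [map_add, map_add, mul_add, hb, hc]⟩
      | smul r x _ hx =>
        obtain ⟨b, hb⟩ := hx
        exact ⟨r * b, by rw [smul_eq_mul, map_mul, map_mul, mul_left_comm, hb]⟩
  obtain ⟨s, hs, hsJ⟩ := step1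
  set w := z * algebraMap A (FractionRing A) s with hw
  have hwp : ∀ a ∈ p, ∀ j ∈ J, ∃ b ∈ J, w * algebraMap A (FractionRing A) j *
      algebraMap A (FractionRing A) a = algebraMap A _ b := by
    intro a ha j hj
    obtain ⟨b, hb, hb'⟩ := hz a ha j hj
    refine ⟨s * b, J.mul_mem_left _ hb, ?_⟩
    rw [map_mul, hb', hw]; ring
  by_cases hall : ∀ j ∈ J, ∃ b ∈ p,
      w * algebraMap A (FractionRing A) j = algebraMap A _ b
  · refine ⟨s, hs, ?_⟩
    intro j hj
    obtain ⟨b, hb, hjb⟩ := hall j hj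
    obtain ⟨c, hc, hc'⟩ := hwp b hb j hj
    refine ⟨b, hrad ⟨2, ?_⟩, hjb.symm⟩
    have : b ^ 2 = c := by
      apply hinj
      rw [← hc', hjb, ← map_mul, sq]
    rwa [this]
  · push Not at hall
    obtain ⟨j, hj, hjn⟩ := hall
    obtain ⟨a, ha⟩ := hsJ j hj
    have hap : a ∉ p := fun h => hjn a h ha
    obtain ⟨t, ht, b, hb⟩ := H (w * algebraMap A (FractionRing A) a) (by
      intro q hq
      obtain ⟨c, hc, hc'⟩ := hwp q hq j hj
      obtain ⟨d, hd⟩ := hsJ c hc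
      refine ⟨d, ?_⟩
      rw [← hd, ← hc', ha]; ring)
    refine ⟨s * a * t, hp.mul_notMem (hp.mul_notMem hs hap) ht, ?_⟩
    have : z * algebraMap A (FractionRing A) (s * a * t) = algebraMap A _ b := by
      rw [← hb, hw, map_mul, map_mul]; ring
    rw [this]
    exact (endIdeal A J).algebraMap_mem b

lemma S2aux.finite {A : Type*} [CommRing A] [IsNoetherianRing A] (J : Ideal A)
    (hnzd : ∃ g ∈ J, g ∈ A⁰) : Module.Finite A (endIdeal A J) := by
  obtain ⟨g, hgJ, hg⟩ := hnzd
  have hu : IsUnit (algebraMap A (FractionRing A) g) :=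
    IsLocalization.map_units (FractionRing A) (⟨g, hg⟩ : A⁰)
  let f : endIdeal A J →ₗ[A] FractionRing A :=
    (LinearMap.mulRight A (algebraMap A (FractionRing A) g)).comp (endIdeal A J).val.toLinearMap
  have hf : Function.Injective f := by
    intro x y hxy
    exact Subtype.ext (hu.mul_right_cancel hxy)
  let h : endIdeal A J →ₗ[A] LinearMap.range (Algebra.linearMap A (FractionRing A)) :=
    f.codRestrict _ (fun x => by
      obtain ⟨b, _, hb⟩ := x.2 g hgJ
      exact ⟨b, hb⟩)
  have : IsNoetherian A (LinearMap.range (Algebra.linearMap A (FractionRing A))) := inferInstance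
  exact Module.Finite.of_injective h (fun x y hxy => hf (congrArg Subtype.val hxy))

/-- Lifting the colon condition from `B_Q` to `B`. -/
lemma S2aux.second_loc {B : Type*} [CommRing B] [IsNoetherianRing B] (Q : Ideal B) [hQ : Q.IsPrime]
    (x : B) (h : ∀ b : B, (∀ q ∈ Q, ∃ c, q * b = x * c) → ∃ s ∉ Q, ∃ c, s * b = x * c) :
    ∃ y ∈ IsLocalRing.maximalIdeal (Localization.AtPrime Q),
      ∀ a b, y * a = algebraMap B (Localization.AtPrime Q) x * b →
        ∃ c, a = algebraMap B (Localization.AtPrime Q) x * c := by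
  have : IsNoetherianRing (Localization.AtPrime Q) :=
    IsLocalization.isNoetherianRing Q.primeCompl _ inferInstance
  apply S2aux.exists_second
  intro a ha
  obtain ⟨b, s, rfl⟩ := IsLocalization.exists_mk'_eq Q.primeCompl a
  have h1 : ∀ q ∈ Q, ∃ t ∉ Q, ∃ c, t * (q * b) = x * c := by
    intro q hq
    obtain ⟨e, he⟩ := ha (algebraMap B _ q)
      ((IsLocalization.AtPrime.to_map_mem_maximal_iff _ Q q).mpr hq)
    obtain ⟨c, t, rfl⟩ := IsLocalization.exists_mk'_eq Q.primeCompl e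
    rw [IsLocalization.mul_mk'_eq_mk'_of_mul, IsLocalization.mul_mk'_eq_mk'_of_mul,
      IsLocalization.mk'_eq_iff_eq, IsLocalization.eq_iff_exists Q.primeCompl] at he
    obtain ⟨r, hr⟩ := he
    refine ⟨r * t, (r * t).2, r * s * c, ?_⟩
    linear_combination hr
  have h2 : ∃ t ∉ Q, ∀ q ∈ Q, ∃ c, t * (q * b) = x * c := by
    obtain ⟨S, hS⟩ : Q.FG := IsNoetherian.noetherian Q
    have hSQ : ∀ j ∈ S, j ∈ Q := fun j hj => hS ▸ Ideal.subset_span hj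
    choose! f hf g hg using h1
    refine ⟨∏ j ∈ S, f j, ?_, ?_⟩
    · intro hmem
      obtain ⟨j, hj, hjp⟩ := (Ideal.IsPrime.prod_mem_iff).mp hmem
      exact hf j (hSQ j hj) hjp
    · intro j hj
      rw [← hS] at hj
      induction hj using Submodule.span_induction with
      | mem j hj =>
        obtain ⟨c, hc⟩ := Finset.dvd_prod_of_mem f hj
        refine ⟨g j * c, ?_⟩
        rw [hc]; linear_combination c * hg j (hSQ j hj)
      | zero => exact ⟨0, by simp⟩
      | add u v _ _ hu hv =>
        obtain ⟨d, hd⟩ := hu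
        obtain ⟨c, hc⟩ := hv
        exact ⟨d + c, by linear_combination hd + hc⟩
      | smul r u _ hu =>
        obtain ⟨d, hd⟩ := hu
        exact ⟨r * d, by rw [smul_eq_mul]; linear_combination r * hd⟩
  obtain ⟨t, ht, h3⟩ := h2
  obtain ⟨r, hr, c, hc⟩ := h (t * b) (fun q hq => by
    obtain ⟨c, hc⟩ := h3 q hq
    exact ⟨c, by rw [← hc]; ring⟩)
  refine ⟨IsLocalization.mk' _ c ((⟨r, hr⟩ : Q.primeCompl) * ⟨t, ht⟩ * s), ?_⟩
  rw [IsLocalization.mul_mk'_eq_mk'_of_mul, IsLocalization.mk'_eq_iff_eq]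
  congr 1
  simp only [Submonoid.coe_mul]
  linear_combination (s : B) * hc

/-- Let `A` be a reduced Noetherian ring satisfying `(S₂)` and let
`J ⊆ A` be a radical ideal containing a non-zerodivisor. Then the ring
`End_A(J) = {x ∈ Q(A) : x·J ⊆ J}` satisfies `(S₂)` as well. -/
theorem endIdeal_satisfies_S2
    (A : Type*) [CommRing A] [IsReduced A] [IsNoetherianRing A]
    (hA : SerreS2 A) (J : Ideal A) (hrad : J.IsRadical)
    (hnzd : ∃ g ∈ J, g ∈ A⁰) :
    SerreS2 (endIdeal A J) := by
  have := S2aux.finite J hnzd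
  have : IsNoetherianRing (endIdeal A J) := IsNoetherianRing.of_finite A _
  have : IsReduced (FractionRing A) := inferInstance
  have : IsReduced (endIdeal A J) :=
    isReduced_of_injective (endIdeal A J).val Subtype.val_injective
  rintro ⟨Q, hQ⟩ n hn hdim
  simp only at hdim ⊢
  rw [IsLocalization.AtPrime.ringKrullDim_eq_height Q] at hdim
  have hdim' : (n : ℕ∞) ≤ Q.height := by exact_mod_cast hdim
  have hdimp : (n : ℕ∞) ≤ (Q.comap (algebraMap A (endIdeal A J))).height :=
    hdim'.trans (S2aux.height_le Q)
  set p := Q.comap (algebraMap A (endIdeal A J)) with hp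
  have : p.IsPrime := Ideal.IsPrime.comap _
  rcases Nat.eq_zero_or_pos n with rfl | hpos
  · exact ⟨[], rfl, by simp, RingTheory.Sequence.IsRegular.nil _ _⟩
  have h1 : (1 : ℕ∞) ≤ p.height := le_trans (by exact_mod_cast hpos) hdimp
  obtain ⟨x, hxp, hx⟩ := S2aux.exists_nzd p h1
  have hux : IsUnit (algebraMap A (FractionRing A) x) :=
    IsLocalization.map_units (FractionRing A) (⟨x, hx⟩ : A⁰)
  set X : endIdeal A J := algebraMap A (endIdeal A J) x with hX
  have hXv : (X : FractionRing A) = algebraMap A (FractionRing A) x := rfl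
  have hXn : X ∈ (endIdeal A J)⁰ := by
    rw [mem_nonZeroDivisors_iff_right]
    intro y hy
    apply Subtype.ext
    have h2 : (y : FractionRing A) * algebraMap A (FractionRing A) x = 0 :=
      congrArg Subtype.val hy
    exact (hux.mul_left_eq_zero).mp h2
  have hXL : algebraMap _ (Localization.AtPrime Q) X ∈ (Localization.AtPrime Q)⁰ :=
    IsLocalization.map_nonZeroDivisors_le Q.primeCompl _ ⟨X, hXn, rfl⟩
  have hXm : algebraMap _ (Localization.AtPrime Q) X ∈
      IsLocalRing.maximalIdeal (Localization.AtPrime Q) :=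
    (IsLocalization.AtPrime.to_map_mem_maximal_iff _ Q X).mpr hxp
  obtain rfl | rfl : n = 1 ∨ n = 2 := by omega
  · refine ⟨[algebraMap _ _ X], rfl, by simpa using hXm, ?_⟩
    apply RingTheory.Sequence.IsRegular.of_isWeaklyRegular_of_mem_maximalIdeal _
      (by simpa using hXm)
    rw [RingTheory.Sequence.isWeaklyRegular_singleton_iff,
      isSMulRegular_iff_right_eq_zero_of_smul]
    intro y hy
    rw [smul_eq_mul, mul_comm] at hy
    exact (mem_nonZeroDivisors_iff_right.mp hXL) y hy
  · obtain ⟨rs, hlen, hrm, hreg⟩ := hA ⟨p, inferInstance⟩ 2 le_rfl (by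
      simp only
      rw [IsLocalization.AtPrime.ringKrullDim_eq_height p]
      exact WithBot.coe_le_coe.mpr hdimp)
    have H := S2aux.star p rs hlen hrm hreg
    have hcl := S2aux.claim J hrad p H
    obtain ⟨y, hym, hy⟩ := S2aux.second_loc Q X (by
      intro b hb
      obtain ⟨i, hi⟩ := hux.exists_right_inv
      obtain ⟨s, hs, hsB⟩ := hcl (b * i) (by
        intro a ha
        obtain ⟨c, hc⟩ := hb (algebraMap A _ a) ha
        have hc' : algebraMap A (FractionRing A) a * b =
          algebraMap A (FractionRing A) x * c := congrArg Subtype.val hc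
        have : (b : FractionRing A) * i * algebraMap A (FractionRing A) a = c := by
          linear_combination i * hc' + (c : FractionRing A) * hi
        rw [this]
        exact c.2)
      refine ⟨algebraMap A _ s, hs, ⟨_, hsB⟩, ?_⟩
      apply Subtype.ext
      change algebraMap A (FractionRing A) s * b = algebraMap A (FractionRing A) x * (b * i *
        algebraMap A (FractionRing A) s)
      linear_combination (-(b : FractionRing A) * algebraMap A (FractionRing A) s) * hi)
    have hmem : ∀ r ∈ [algebraMap _ (Localization.AtPrime Q) X, y],
        r ∈ IsLocalRing.maximalIdeal (Localization.AtPrime Q) := by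
      intro r hr
      simp only [List.mem_cons, List.not_mem_nil, or_false] at hr
      rcases hr with rfl | rfl
      · exact hXm
      · exact hym
    exact ⟨_, rfl, hmem, RingTheory.Sequence.IsRegular.of_isWeaklyRegular_of_mem_maximalIdeal _
      hmem ((S2aux.pair_iff _ _).mpr ⟨hXL, hy⟩)⟩
end
end

section
/- Let A be a reduced Noetherian commutative ring satisfying Serre's condition (S_2), and let J ⊆ A be a radical ideal containing a non-zerodivisor of A. If the localization A_P is a regular local ring for every associated prime P of A/J with height P = 1, then End_A(J) = A, i.e., every x ∈ Q(A) with x·J ⊆ J lies in A. -/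
set_option synthInstance.maxHeartbeats 1000000
set_option maxHeartbeats 1000000

open scoped nonZeroDivisors

noncomputable section

/-- A Noetherian local ring is regular if its maximal ideal can be generated by
Krull-dimension-many elements. -/
def IsRegularLocal (R : Type*) [CommRing R] [IsLocalRing R] : Prop :=
  IsNoetherianRing R ∧ ∃ s : Finset R,
    Ideal.span (s : Set R) = IsLocalRing.maximalIdeal R ∧
      (s.card : WithBot ℕ∞) = ringKrullDim R

theorem aux_dvd_of_regular_pair {R : Type*} [CommRing R] {g k a b : R} (hg : g ∈ R⁰)
    (hab : RingTheory.Sequence.IsWeaklyRegular R [a, b])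
    (ha : g ∣ a * k) (hb : g ∣ b * k) : g ∣ k := by
  rw [RingTheory.Sequence.isWeaklyRegular_cons_iff,
    RingTheory.Sequence.isWeaklyRegular_cons_iff] at hab
  obtain ⟨h1, h2, -⟩ := hab
  obtain ⟨u, hu⟩ := ha
  obtain ⟨v, hv⟩ := hb
  have e : a * v = b * u := by
    apply mul_cancel_left_mem_nonZeroDivisors hg |>.mp
    calc g * (a * v) = a * (g * v) := by ring
      _ = b * (a * k) := by rw [← hv]; ring
      _ = g * (b * u) := by rw [hu]; ring
  have hu0 : (Submodule.Quotient.mk u : QuotSMulTop a R) = 0 := by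
    apply h2
    change b • (Submodule.Quotient.mk u : QuotSMulTop a R) = b • 0
    rw [smul_zero, ← Submodule.Quotient.mk_smul, Submodule.Quotient.mk_eq_zero]
    rw [smul_eq_mul, ← e]
    exact Submodule.smul_mem_pointwise_smul v a ⊤ trivial
  rw [Submodule.Quotient.mk_eq_zero, Submodule.mem_smul_pointwise_iff_exists] at hu0
  obtain ⟨w, -, hw⟩ := hu0
  refine ⟨w, h1 ?_⟩
  change a * k = a * (g * w)
  rw [hu, ← hw, smul_eq_mul]
  ring

theorem aux_exists_mul_mem {A : Type*} [CommRing A] {J P : Ideal A} [P.IsPrime]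
    (hrad : J.IsRadical) (hP : P ∈ J.minimalPrimes) {p : A} (hp : p ∈ P) :
    ∃ s ∉ P, s * p ∈ J := by
  have h := IsLocalization.AtPrime.radical_map_of_mem_minimalPrimes
    (A := Localization.AtPrime P) P J hP
  have hp' : algebraMap A (Localization.AtPrime P) p ∈
      (J.map (algebraMap A (Localization.AtPrime P))).radical := by
    rw [h]; exact Ideal.mem_map_of_mem _ hp
  obtain ⟨n, hn⟩ := hp'
  rw [← map_pow, IsLocalization.algebraMap_mem_map_algebraMap_iff P.primeCompl] at hn
  obtain ⟨s, hs, hsn⟩ := hn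
  refine ⟨s, hs, hrad ⟨n + 1, ?_⟩⟩
  have : (s * p) ^ (n + 1) = (s ^ n * p) * (s * p ^ n) := by ring
  rw [this]
  exact J.mul_mem_left _ hsn

/-- Let `A` be a reduced Noetherian ring satisfying `(S₂)` and let
`J ⊆ A` be a radical ideal containing a non-zerodivisor. If `A_P` is regular for
every associated prime `P` of `A/J` of height one, then `End_A(J) = A`. -/
theorem endIdeal_eq_self_of_regular_in_height_one
    (A : Type*) [CommRing A] [IsReduced A] [IsNoetherianRing A]
    (hA : SerreS2 A) (J : Ideal A) (hrad : J.IsRadical)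
    (hnzd : ∃ g ∈ J, g ∈ A⁰)
    (hreg : ∀ P : PrimeSpectrum A, P.asIdeal ∈ associatedPrimes A (A ⧸ J) →
      ringKrullDim (Localization.AtPrime P.asIdeal) = 1 →
      IsRegularLocal (Localization.AtPrime P.asIdeal)) :
    endIdeal A J = ⊥ := by
  classical
  rw [eq_bot_iff]
  intro x hx
  change ∀ j ∈ J, x * algebraMap A (FractionRing A) j ∈ algebraMap A (FractionRing A) '' J at hx
  obtain ⟨g, hgJ, hg⟩ := hnzd
  have inj : Function.Injective (algebraMap A (FractionRing A)) := IsFractionRing.injective _ _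
  obtain ⟨h, hhJ, hh⟩ := hx g hgJ
  -- the multiplication by `x` in terms of `h / g`
  have key : ∀ j ∈ J, ∃ j' ∈ J, h * j = g * j' := by
    intro j hj
    obtain ⟨j', hj', e⟩ := hx j hj
    refine ⟨j', hj', inj ?_⟩
    rw [map_mul, map_mul, hh, e]
    ring
  let D : Ideal A := (Ideal.span {g}).colon {h}
  have memD : ∀ d, d ∈ D ↔ g ∣ d * h := by
    intro d
    simp [D, Submodule.mem_colon_singleton, Ideal.mem_span_singleton]
  by_cases hD : D = ⊤
  · have : (1 : A) ∈ D := by rw [hD]; trivial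
    rw [memD, one_mul] at this
    obtain ⟨w, hw⟩ := this
    rw [Algebra.mem_bot]
    refine ⟨w, ?_⟩
    have hu : IsUnit (algebraMap A (FractionRing A) g) :=
      IsLocalization.map_units (FractionRing A) (⟨g, hg⟩ : A⁰)
    apply hu.mul_right_cancel
    rw [← hh, hw, map_mul, mul_comm]
  exfalso
  have hne : (1 : A ⧸ D) ≠ 0 := by
    have := Ideal.Quotient.nontrivial_iff.mpr hD
    exact one_ne_zero
  obtain ⟨P, hPass, hDP⟩ := exists_le_isAssociatedPrime_of_isNoetherianRing A (1 : A ⧸ D) hne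
  rw [isAssociatedPrime_iff] at hPass
  obtain ⟨hPprime, c', hc'⟩ := hPass
  obtain ⟨c, rfl⟩ := Ideal.Quotient.mk_surjective c'
  have memP : ∀ d, d ∈ P ↔ g ∣ d * (c * h) := by
    intro d
    rw [hc', Submodule.mem_colon_singleton, Submodule.mem_bot, ← mul_assoc, ← memD,
      ← Ideal.Quotient.eq_zero_iff_mem, map_mul]
    rfl
  have hJP : J ≤ P := by
    intro j hj
    rw [memP]
    obtain ⟨j', -, e⟩ := key j hj
    exact ⟨c * j', by linear_combination c * e⟩
  clear hDP
  set k := c * h with hk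
  have key' : ∀ j ∈ J, ∃ j' ∈ J, k * j = g * j' := by
    intro j hj
    obtain ⟨j', hj', e⟩ := key j hj
    exact ⟨c * j', J.mul_mem_left _ hj', by linear_combination c * e⟩
  clear_value k
  let R := Localization.AtPrime P
  let f := algebraMap A R
  have hgR : f g ∈ R⁰ := IsLocalization.map_nonZeroDivisors_le P.primeCompl R ⟨g, hg, rfl⟩
  have hnot : ¬ f g ∣ f k := by
    rintro ⟨r, hr⟩
    obtain ⟨⟨a, s⟩, e⟩ := IsLocalization.surj P.primeCompl r
    have e2 : f (k * s) = f (g * a) := by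
      rw [map_mul, map_mul, hr, mul_assoc]
      exact congrArg _ e
    obtain ⟨u, hu⟩ := (IsLocalization.eq_iff_exists P.primeCompl R).mp e2
    have : (u * s : A) ∈ P := by
      rw [memP]
      exact ⟨u * a, by linear_combination hu⟩
    exact (u * s).2 this
  have hm : ∀ a ∈ IsLocalRing.maximalIdeal R, f g ∣ a * f k := by
    intro a ha
    rw [← Localization.AtPrime.map_eq_maximalIdeal] at ha
    have : P.map f ≤ (Ideal.span {f g}).colon {f k} := by
      rw [Ideal.map_le_iff_le_comap]
      intro d hd
      rw [Ideal.mem_comap, Submodule.mem_colon_singleton, smul_eq_mul, Ideal.mem_span_singleton,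
        ← map_mul]
      exact map_dvd f ((memP d).mp hd)
    have := this ha
    rwa [Submodule.mem_colon_singleton, smul_eq_mul, Ideal.mem_span_singleton] at this
  have hdim2 : ¬ ((2 : ℕ) : WithBot ℕ∞) ≤ ringKrullDim R := by
    intro h2
    obtain ⟨rs, hlen, hmem, hreg⟩ := hA ⟨P, hPprime⟩ 2 le_rfl h2
    obtain ⟨a, b, rfl⟩ := List.length_eq_two.mp hlen
    exact hnot (aux_dvd_of_regular_pair hgR hreg.toIsWeaklyRegular
      (hm a (hmem a (by simp))) (hm b (hmem b (by simp))))
  have hheq : ringKrullDim R = P.height := IsLocalization.AtPrime.ringKrullDim_eq_height P R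
  have hprime0 : ∀ Q : Ideal A, Q.IsPrime → J ≤ Q → Q.height ≠ 0 := by
    intro Q hQ hJQ h0
    rw [Ideal.height_eq_zero_iff] at h0
    exact Set.disjoint_left.mp (Ideal.disjoint_nonZeroDivisors_of_mem_minimalPrimes h0)
      (hJQ hgJ) hg
  have hP1 : P.height = 1 := by
    have h0 := hprime0 P hPprime hJP
    have h2 : ¬ (2 : ℕ∞) ≤ P.height := by
      intro h2
      apply hdim2
      rw [hheq]
      exact WithBot.coe_le_coe.mpr h2
    apply le_antisymm
    · rw [not_le] at h2
      exact Order.le_of_lt_add_one (by simpa [one_add_one_eq_two] using h2)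
    · exact Order.one_le_iff_pos.mpr (pos_iff_ne_zero.mpr h0)
  have hPmin : P ∈ J.minimalPrimes := by
    obtain ⟨Q, hQ, hQP⟩ := Ideal.exists_minimalPrimes_le hJP
    have hQp : Q.IsPrime := hQ.1.1
    rcases hQP.eq_or_lt with rfl | hlt
    · exact hQ
    · exfalso
      have := Ideal.height_strict_mono_of_isPrime_of_isPrime hlt
      rw [hP1, Order.lt_one_iff] at this
      exact hprime0 Q hQp hQ.1.2 this
  have hPassJ : P ∈ associatedPrimes A (A ⧸ J) := by
    apply Module.associatedPrimes.minimalPrimes_annihilator_subset_associatedPrimes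
    rwa [Ideal.annihilator_quotient]
  have hd1 : ringKrullDim R = 1 := by rw [hheq, hP1]; rfl
  obtain ⟨-, s, hs, hcard⟩ := hreg ⟨P, hPprime⟩ hPassJ hd1
  change _ = ringKrullDim R at hcard
  rw [hd1] at hcard
  have hcard' : s.card = 1 := by exact_mod_cast hcard
  obtain ⟨t, rfl⟩ := Finset.card_eq_one.mp hcard'
  rw [Finset.coe_singleton] at hs
  change Ideal.span {t} = IsLocalRing.maximalIdeal R at hs
  have hmt : ∀ r ∈ IsLocalRing.maximalIdeal R, t ∣ r := by
    intro r hr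
    rwa [← hs, Ideal.mem_span_singleton] at hr
  have hPm : ∀ p ∈ P, f p ∈ IsLocalRing.maximalIdeal R := by
    intro p hp
    rw [← Localization.AtPrime.map_eq_maximalIdeal]
    exact Ideal.mem_map_of_mem _ hp
  -- an element of `J` dividing everything in the maximal ideal
  have htm : t ∈ IsLocalRing.maximalIdeal R := by rw [← hs]; exact Ideal.mem_span_singleton_self t
  obtain ⟨⟨p, s⟩, e⟩ := IsLocalization.surj P.primeCompl t
  change t * f s = f p at e
  have hpP : p ∈ P := by
    rw [← IsLocalization.AtPrime.to_map_mem_maximal_iff R P]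
    change f p ∈ IsLocalRing.maximalIdeal R
    rw [← e]
    exact Ideal.mul_mem_right _ _ htm
  obtain ⟨s', hs', hj⟩ := aux_exists_mul_mem hrad hPmin hpP
  have hus : IsUnit (f s) := IsLocalization.map_units R s
  have hus' : IsUnit (f s') := IsLocalization.map_units R (⟨s', hs'⟩ : P.primeCompl)
  have hjt : f (s' * p) = t * (f s * f s') := by
    rw [map_mul, ← e]; ring
  have hjdvd : ∀ r ∈ IsLocalRing.maximalIdeal R, f (s' * p) ∣ r := by
    intro r hr
    rw [hjt, (hus.mul hus').mul_right_dvd]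
    exact hmt r hr
  obtain ⟨j', hj', ej⟩ := key' _ hj
  obtain ⟨r, hr⟩ := hjdvd _ (hPm j' (hJP hj'))
  obtain ⟨q, hq⟩ := hjdvd _ (hPm g (hJP hgJ))
  have hjR : f (s' * p) ∈ R⁰ := by
    rw [hq] at hgR
    exact (mul_mem_nonZeroDivisors.mp hgR).1
  apply hnot
  refine ⟨r, (mul_cancel_right_mem_nonZeroDivisors hjR).mp ?_⟩
  rw [← map_mul, ej, map_mul, hr]
  ring
end
end

section
/- Let A be a reduced Noetherian commutative ring which is equidimensional, satisfies Serre's condition (S_2), and whose integral closure Ā in Q(A) is a finite A-module. Let J be a test ideal for A, and let J′ ⊆ A be a radical ideal such that every associated prime of A/J′ is an associated prime of A/J. Then n(A, J′) ≤ n(A, J). -/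
set_option synthInstance.maxHeartbeats 1000000
set_option maxHeartbeats 1000000

open scoped nonZeroDivisors

noncomputable section

/-- A test ideal for `A`. -/
def IsTestIdeal (A : Type*) [CommRing A] (J : Ideal A) : Prop :=
  (∃ g ∈ J, g ∈ A⁰) ∧ J.IsRadical ∧
    PrimeSpectrum.zeroLocus (conductorIdeal A : Set A) ⊆
      PrimeSpectrum.zeroLocus (J : Set A)

/-- `A` is equidimensional: all minimal primes have quotients of the same Krull
dimension and all maximal ideals have the same height. -/
def Equidimensional (A : Type*) [CommRing A] : Prop :=
  (∀ P Q : Ideal A, P ∈ minimalPrimes A → Q ∈ minimalPrimes A →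
      ringKrullDim (A ⧸ P) = ringKrullDim (A ⧸ Q)) ∧
    (∀ M N : PrimeSpectrum A, M.asIdeal.IsMaximal → N.asIdeal.IsMaximal →
      ringKrullDim (Localization.AtPrime M.asIdeal)
        = ringKrullDim (Localization.AtPrime N.asIdeal))


namespace GR

lemma exists_mul_le {R : Type*} [CommRing R] [IsNoetherianRing R] (I : Ideal R)
    (hI : I.IsRadical) (q : Ideal R) (hq : q ∈ I.minimalPrimes) :
    ∃ s, s ∉ q ∧ ∀ r ∈ q, s * r ∈ I := by
  classical
  have hfin := I.finite_minimalPrimes_of_isNoetherianRing R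
  have hqp : q.IsPrime := hq.1.1
  have h1 : ¬ ((hfin.toFinset.erase q).inf id ≤ q) := by
    intro h
    obtain ⟨p, hp, hpq⟩ := (hqp.inf_le').1 h
    simp only [Finset.mem_erase, Set.Finite.mem_toFinset, id] at hp hpq
    exact hp.1 (le_antisymm hpq (hq.2 hp.2.1 hpq))
  obtain ⟨s, hs, hsq⟩ := SetLike.not_le_iff_exists.1 h1
  refine ⟨s, hsq, fun r hr => ?_⟩
  rw [← hI.radical, ← Ideal.sInf_minimalPrimes, Submodule.mem_sInf]
  intro p hp
  by_cases hpq : p = q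
  · subst hpq; exact Ideal.mul_mem_left p _ hr
  · apply Ideal.mul_mem_right _ p
    rw [Submodule.mem_finsetInf] at hs
    exact hs p (by simp [hpq, hp])

variable {A : Type*} [CommRing A]


/-- Saturation of a set with respect to a family of ideals. -/
def Sat (S : Set (Ideal A)) (M : Subalgebra A (FractionRing A)) : Prop :=
  ∀ x : FractionRing A, (∀ P ∈ S, ∃ a, a ∉ P ∧ a • x ∈ M) → x ∈ M

lemma mem_endStep {B : Subalgebra A (FractionRing A)} {I : Ideal B} {x : FractionRing A} :
    x ∈ endStep A B I ↔ ∀ j ∈ I, ∃ b ∈ I, (b : FractionRing A) = x * j := Iff.rfl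

lemma le_endStep (B : Subalgebra A (FractionRing A)) (I : Ideal B) : B ≤ endStep A B I := by
  intro x hx
  rw [mem_endStep]
  intro j hj
  exact ⟨⟨x, hx⟩ * j, I.mul_mem_left _ hj, rfl⟩

lemma sat_endStep (S : Set (Ideal A)) (B : Subalgebra A (FractionRing A)) [IsNoetherianRing B]
    (hB : Sat S B) (I : Ideal B) (hI : I.IsRadical) : Sat S (endStep A B I) := by
  intro x hx
  have hxB : ∀ j ∈ I, x * (j : FractionRing A) ∈ B := by
    intro j hj
    apply hB
    intro P hP
    obtain ⟨a, haP, ha⟩ := hx P hP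
    obtain ⟨b, hb, hbe⟩ := mem_endStep.1 ha j hj
    refine ⟨a, haP, ?_⟩
    rw [← smul_mul_assoc, ← hbe]
    exact b.2
  rw [mem_endStep]
  intro j hj
  refine ⟨⟨_, hxB j hj⟩, ?_, rfl⟩
  rw [← hI.radical, ← Ideal.sInf_minimalPrimes, Submodule.mem_sInf]
  intro q hq
  have hqp : Ideal.IsPrime q := hq.1.1
  by_cases hc : ∃ a : A, algebraMap A B a ∉ q ∧ a • x ∈ endStep A B I
  · obtain ⟨a, haq, ha⟩ := hc
    obtain ⟨b, hb, hbe⟩ := mem_endStep.1 ha j hj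
    refine (hqp.mem_or_mem (x := algebraMap A B a) ?_).resolve_left haq
    convert hq.1.2 hb
    apply Subtype.ext
    rw [hbe, Algebra.smul_def, mul_assoc]
    rfl
  · push Not at hc
    obtain ⟨s, hsq, hs⟩ := exists_mul_le I hI q hq
    have hxs : x * (s : FractionRing A) ∈ B := by
      apply hB
      intro P hP
      obtain ⟨a, haP, ha⟩ := hx P hP
      refine ⟨a, haP, ?_⟩
      have haq : algebraMap A B a ∈ q := by
        by_contra h
        exact hc a h ha
      convert hxB _ (hs _ haq) using 1
      rw [Algebra.smul_def]
      push_cast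
      rw [mul_comm, mul_assoc]
    refine (hqp.mem_or_mem (x := s) ?_).resolve_left hsq
    convert Ideal.mul_mem_left q ⟨_, hxs⟩ (hq.1.2 hj) using 1
    apply Subtype.ext
    simp only [MulMemClass.mk_mul_mk, MulMemClass.coe_mul]
    ring

lemma isNoetherian_of_le [IsNoetherianRing A]
    [Module.Finite A (integralClosure A (FractionRing A))]
    (B : Subalgebra A (FractionRing A)) (hB : B ≤ integralClosure A (FractionRing A)) :
    IsNoetherian A B :=
  isNoetherian_of_injective (Subalgebra.inclusion hB).toLinearMap
    (Subalgebra.inclusion_injective hB)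

lemma endStep_le [IsNoetherianRing A] [Module.Finite A (integralClosure A (FractionRing A))]
    (B : Subalgebra A (FractionRing A)) (hB : B ≤ integralClosure A (FractionRing A))
    (I : Ideal B) (g : A) (hg : g ∈ A⁰) (hgI : algebraMap A B g ∈ I) :
    endStep A B I ≤ integralClosure A (FractionRing A) := by
  intro x hx
  have := isNoetherian_of_le B hB
  let N : Submodule A B := I.restrictScalars A
  have hN : Module.Finite A N := inferInstance
  let f : Module.End A N :=
    { toFun := fun j => ⟨⟨x * (j.1 : FractionRing A), by
          obtain ⟨b, hb, hbe⟩ := mem_endStep.1 hx j.1 j.2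
          rw [← hbe]; exact b.2⟩, by
          obtain ⟨b, hb, hbe⟩ := mem_endStep.1 hx j.1 j.2
          have : (⟨x * (j.1 : FractionRing A), hbe ▸ b.2⟩ : B) = b := Subtype.ext hbe.symm
          change _ ∈ I
          rw [this]
          exact hb⟩
      map_add' := by
        intro u v; ext; simp [mul_add]
      map_smul' := by
        intro u v; ext; simp }
  have hf : ∀ j, ((f j).1 : FractionRing A) = x * (j.1 : FractionRing A) := fun j => rfl
  obtain ⟨p, hp, hpf⟩ := LinearMap.exists_monic_and_aeval_eq_zero (M := N) A f
  have key : ∀ p : Polynomial A, ∀ j, ((Polynomial.aeval f p j).1 : FractionRing A)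
      = Polynomial.aeval x p * (j.1 : FractionRing A) := by
    intro p
    induction p using Polynomial.induction_on with
    | C a => intro j; simp [Algebra.smul_def]
    | add p q hp hq => intro j; simp [hp, hq, add_mul]
    | monomial n a h =>
      intro j
      rw [pow_succ, ← mul_assoc, map_mul _ (_ * _), map_mul _ (_ * _), Module.End.mul_apply, h]
      simp only [Polynomial.aeval_X, hf, mul_assoc]
  have h0 := key p ⟨_, hgI⟩
  rw [hpf] at h0
  refine ⟨p, hp, ?_⟩
  have hu : IsUnit (algebraMap A (FractionRing A) g) :=
    IsLocalization.map_units (M := A⁰) (FractionRing A) ⟨g, hg⟩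
  have h1 : (Polynomial.aeval x p) * algebraMap A (FractionRing A) g = 0 := h0.symm
  exact (hu.mul_left_eq_zero).1 h1

lemma chain_le [IsNoetherianRing A] [Module.Finite A (integralClosure A (FractionRing A))]
    (J : Ideal A) (g : A) (hg : g ∈ A⁰) (hgJ : g ∈ J) (n : ℕ) :
    chainRing A J n ≤ integralClosure A (FractionRing A) := by
  induction n with
  | zero => exact bot_le
  | succ n ih =>
    exact endStep_le _ ih _ g hg (Ideal.le_radical (Ideal.mem_map_of_mem _ hgJ))

lemma chain_noeth [IsNoetherianRing A] [Module.Finite A (integralClosure A (FractionRing A))]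
    (J : Ideal A) (g : A) (hg : g ∈ A⁰) (hgJ : g ∈ J) (n : ℕ) :
    IsNoetherianRing (chainRing A J n) :=
  have := isNoetherian_of_le _ (chain_le J g hg hgJ n)
  isNoetherian_of_tower A this

lemma chain_mono (J : Ideal A) : Monotone (chainRing A J) :=
  monotone_nat_of_le_succ fun _ => le_endStep _ _

lemma chain_stab [IsNoetherianRing A] [Module.Finite A (integralClosure A (FractionRing A))]
    (J : Ideal A) (g : A) (hg : g ∈ A⁰) (hgJ : g ∈ J) :
    ∃ n, chainRing A J n = chainRing A J (n + 1) := by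
  let N := (integralClosure A (FractionRing A))
  let F : ℕ →o Submodule A N :=
    { toFun := fun n => (Subalgebra.toSubmodule (chainRing A J n)).comap N.val.toLinearMap
      monotone' := fun a b h => Submodule.comap_mono (chain_mono J h) }
  obtain ⟨n, hn⟩ := monotone_stabilizes_iff_noetherian.2 (inferInstance : IsNoetherian A N) F
  refine ⟨n, le_antisymm (chain_mono J n.le_succ) fun x hx => ?_⟩
  have h := hn (n+1) n.le_succ
  have hx' : (⟨x, chain_le J g hg hgJ _ hx⟩ : N) ∈ F (n+1) := hx
  rw [← h] at hx'
  exact hx'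

lemma sat_chain [IsNoetherianRing A] [Module.Finite A (integralClosure A (FractionRing A))]
    (S : Set (Ideal A)) (h0 : Sat S (⊥ : Subalgebra A (FractionRing A)))
    (J : Ideal A) (g : A) (hg : g ∈ A⁰) (hgJ : g ∈ J) (n : ℕ) :
    Sat S (chainRing A J n) := by
  induction n with
  | zero => exact h0
  | succ n ih =>
    have := chain_noeth J g hg hgJ n
    exact sat_endStep S _ ih _ (Ideal.radical_isRadical _)

/-- Local comparison at `P`. -/
def LocLE (P : Ideal A) (B C : Subalgebra A (FractionRing A)) : Prop :=
  ∀ x ∈ B, ∃ s, s ∉ P ∧ s • x ∈ C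

lemma loc_map (P : Ideal A) [hP : P.IsPrime] (B C : Subalgebra A (FractionRing A))
    (h : LocLE P B C) (J L : Ideal A) (hJL : ∃ s, s ∉ P ∧ ∀ j ∈ J, s * j ∈ L)
    (j : B) (hj : j ∈ J.map (algebraMap A B)) :
    ∃ s, s ∉ P ∧ ∃ k ∈ L.map (algebraMap A C), (k : FractionRing A) = s • (j : FractionRing A) := by
  obtain ⟨s, hs, hsJ⟩ := hJL
  induction hj using Submodule.span_induction with
  | mem x hx =>
    obtain ⟨a, ha, rfl⟩ := hx
    exact ⟨s, hs, algebraMap A C (s * a), Ideal.mem_map_of_mem _ (hsJ a ha), by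
      rw [Algebra.smul_def]
      exact map_mul (algebraMap A (FractionRing A)) s a⟩
  | zero => exact ⟨s, hs, 0, Ideal.zero_mem _, by simp⟩
  | add x y _ _ hx hy =>
    obtain ⟨s1, h1, k1, hk1, e1⟩ := hx
    obtain ⟨s2, h2, k2, hk2, e2⟩ := hy
    refine ⟨s1 * s2, fun h => (hP.mem_or_mem h).elim h1 h2, s2 • k1 + s1 • k2,
      Ideal.add_mem _ (Submodule.smul_of_tower_mem _ _ hk1)
        (Submodule.smul_of_tower_mem _ _ hk2), ?_⟩
    push_cast
    rw [e1, e2, smul_add, smul_smul, smul_smul, mul_comm s2]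
  | smul a x _ hx =>
    obtain ⟨s1, h1, k1, hk1, e1⟩ := hx
    obtain ⟨s2, h2, h3⟩ := h a a.2
    refine ⟨s2 * s1, fun h => (hP.mem_or_mem h).elim h2 h1, ⟨_, h3⟩ * k1,
      Ideal.mul_mem_left _ _ hk1, ?_⟩
    push_cast
    rw [e1, smul_eq_mul]
    push_cast
    rw [smul_mul_smul_comm]

lemma loc_rad (P : Ideal A) [hP : P.IsPrime] (B C : Subalgebra A (FractionRing A))
    (h : LocLE P B C) (J L : Ideal A) (hJL : ∃ s, s ∉ P ∧ ∀ j ∈ J, s * j ∈ L)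
    (j : B) (hj : j ∈ (J.map (algebraMap A B)).radical) :
    ∃ s, s ∉ P ∧ ∃ k ∈ (L.map (algebraMap A C)).radical,
      (k : FractionRing A) = s • (j : FractionRing A) := by
  obtain ⟨n, hn⟩ := hj
  obtain ⟨s, hs, k, hk, e⟩ := loc_map P B C h J L hJL _ hn
  obtain ⟨t, ht, htj⟩ := h j j.2
  refine ⟨s * t, fun h => (hP.mem_or_mem h).elim hs ht, s • ⟨_, htj⟩, ⟨n + 1, ?_⟩, ?_⟩
  · have : (s • (⟨_, htj⟩ : C)) ^ (n + 1) = (s ^ n * t ^ n) • ((⟨_, htj⟩ : C) * k) := by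
      apply Subtype.ext
      push_cast
      rw [e]
      push_cast
      simp only [Algebra.smul_def, map_mul, map_pow]
      ring
    rw [this]
    exact Submodule.smul_of_tower_mem _ _ (Ideal.mul_mem_left _ _ hk)
  · push_cast
    rw [smul_smul]

lemma loc_endStep (P : Ideal A) [hP : P.IsPrime] (B C : Subalgebra A (FractionRing A))
    [IsNoetherianRing C]
    (h : LocLE P B C) (h' : LocLE P C B) (J L : Ideal A)
    (hJL : ∃ s, s ∉ P ∧ ∀ j ∈ J, s * j ∈ L) (hLJ : ∃ s, s ∉ P ∧ ∀ j ∈ L, s * j ∈ J) :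
    LocLE P (endStep A B (J.map (algebraMap A B)).radical)
      (endStep A C (L.map (algebraMap A C)).radical) := by
  intro x hx
  set I := (L.map (algebraMap A C)).radical with hI
  obtain ⟨T, hT⟩ := (isNoetherianRing_iff_ideal_fg C).1 inferInstance I
  have h1 : ∀ k ∈ I, ∃ s, s ∉ P ∧ ∃ b ∈ I,
      (b : FractionRing A) = s • (x * (k : FractionRing A)) := by
    intro k hk
    obtain ⟨s, hs, j, hj, e⟩ := loc_rad P C B h' L J hLJ k hk
    obtain ⟨b, hb, eb⟩ := mem_endStep.1 hx j hj
    obtain ⟨t, ht, c, hc, ec⟩ := loc_rad P B C h J L hJL b hb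
    refine ⟨t * s, fun h => (hP.mem_or_mem h).elim ht hs, c, hc, ?_⟩
    rw [ec, eb, e, mul_smul_comm, smul_smul]
  choose! σ hσ hσ' using h1
  have hTI : ∀ k ∈ T, k ∈ I := fun k hk => hT ▸ Ideal.subset_span hk
  refine ⟨∏ k ∈ T, σ k, ?_, ?_⟩
  · rw [hP.prod_mem_iff]
    rintro ⟨k, hk, hk'⟩
    exact hσ k (hTI k hk) hk'
  · rw [mem_endStep]
    intro k hk
    rw [← hT] at hk
    induction hk using Submodule.span_induction with
    | mem k hk =>
      classical
      obtain ⟨b, hb, e⟩ := hσ' k (hTI k hk)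
      refine ⟨(∏ l ∈ T.erase k, σ l) • b, Submodule.smul_of_tower_mem _ _ hb, ?_⟩
      rw [← Finset.prod_erase_mul _ _ hk]
      push_cast
      rw [e, smul_smul, smul_mul_assoc]
    | zero => exact ⟨0, Ideal.zero_mem _, by simp⟩
    | add u v _ _ hu hv =>
      obtain ⟨b, hb, e⟩ := hu
      obtain ⟨c, hc, e'⟩ := hv
      exact ⟨b + c, Ideal.add_mem _ hb hc, by push_cast; rw [e, e', mul_add]⟩
    | smul a u _ hu =>
      obtain ⟨b, hb, e⟩ := hu
      exact ⟨a * b, Ideal.mul_mem_left _ _ hb, by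
        push_cast; rw [e, smul_eq_mul]; push_cast; ring⟩

lemma loc_chain [IsNoetherianRing A] [Module.Finite A (integralClosure A (FractionRing A))]
    (P : Ideal A) [hP : P.IsPrime] (J L : Ideal A) (g : A) (hg : g ∈ A⁰) (hgJ : g ∈ J)
    (hgL : g ∈ L)
    (hJL : ∃ s, s ∉ P ∧ ∀ j ∈ J, s * j ∈ L) (hLJ : ∃ s, s ∉ P ∧ ∀ j ∈ L, s * j ∈ J) (n : ℕ) :
    LocLE P (chainRing A J n) (chainRing A L n) ∧ LocLE P (chainRing A L n) (chainRing A J n) := by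
  induction n with
  | zero =>
    have h1 : (1 : A) ∉ P := fun h => hP.ne_top ((Ideal.eq_top_iff_one _).2 h)
    exact ⟨fun x hx => ⟨1, h1, by simpa using! hx⟩, fun x hx => ⟨1, h1, by simpa using! hx⟩⟩
  | succ n ih =>
    have := chain_noeth J g hg hgJ n
    have := chain_noeth L g hg hgL n
    exact ⟨loc_endStep P _ _ ih.1 ih.2 J L hJL hLJ, loc_endStep P _ _ ih.2 ih.1 L J hLJ hJL⟩

lemma sat_bot [IsNoetherianRing A] (hS2 : SerreS2 A) :
    Sat {P : Ideal A | P.IsPrime ∧ P.height ≤ 1} (⊥ : Subalgebra A (FractionRing A)) := by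
  intro x hx
  by_contra hxn
  let N := Subalgebra.toSubmodule (⊥ : Subalgebra A (FractionRing A))
  have hx0 : (N.mkQ x) ≠ 0 := by
    intro h
    exact hxn ((Submodule.Quotient.mk_eq_zero N).1 h)
  obtain ⟨P, hPass, hle⟩ := exists_le_isAssociatedPrime_of_isNoetherianRing A _ hx0
  obtain ⟨hP, y, hy⟩ := isAssociatedPrime_iff.1 hPass
  obtain ⟨y, rfl⟩ := N.mkQ_surjective y
  have hPy : ∀ a, a ∈ P ↔ a • y ∈ (⊥ : Subalgebra A (FractionRing A)) := by
    intro a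
    rw [hy, Submodule.mem_colon_singleton, ← map_smul, Submodule.mem_bot]
    exact Submodule.Quotient.mk_eq_zero N
  have hht : ¬ P.height ≤ 1 := by
    intro h
    obtain ⟨a, haP, ha⟩ := hx P ⟨hP, h⟩
    apply haP
    apply hle
    rw [Submodule.mem_colon_singleton, ← map_smul, Submodule.mem_bot]
    exact (Submodule.Quotient.mk_eq_zero N).2 ha
  have hht2 : ((2 : ℕ) : WithBot ℕ∞) ≤ ringKrullDim (Localization.AtPrime P) := by
    rw [IsLocalization.AtPrime.ringKrullDim_eq_height P (Localization.AtPrime P)]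
    have : (2 : ℕ∞) ≤ P.height := by
      rw [not_le] at hht
      have := Order.add_one_le_of_lt hht
      rwa [one_add_one_eq_two] at this
    exact WithBot.coe_le_coe.2 this
  obtain ⟨rs, hlen, hmem, hreg⟩ := hS2 ⟨P, hP⟩ 2 le_rfl hht2
  obtain ⟨r1, r2, rfl⟩ := List.length_eq_two.1 hlen
  dsimp only at hmem hreg r1 r2
  have hw := hreg.toIsWeaklyRegular
  rw [RingTheory.Sequence.isWeaklyRegular_cons_iff, RingTheory.Sequence.isWeaklyRegular_cons_iff] at hw
  obtain ⟨hr1, hr2, -⟩ := hw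
  let φ := algebraMap A (Localization.AtPrime P)
  obtain ⟨b, c, rfl⟩ := IsLocalization.exists_mk'_eq A⁰ y
  have hPc : ∀ a, a ∈ P ↔ ∃ u, a * b = c * u := by
    intro a
    rw [hPy, Algebra.mem_bot, IsLocalization.smul_mk'] 
    constructor
    · rintro ⟨u, hu⟩
      refine ⟨u, ?_⟩
      rw [IsLocalization.eq_mk'_iff_mul_eq, ← map_mul] at hu
      have := IsFractionRing.injective A (FractionRing A) hu
      rw [← this, mul_comm]
    · rintro ⟨u, hu⟩
      refine ⟨u, ?_⟩
      rw [IsLocalization.eq_mk'_iff_mul_eq, ← map_mul, hu, mul_comm]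
  have hφc : ∀ u v, φ c * u = φ c * v → u = v := by
    have : φ c ∈ (Localization.AtPrime P)⁰ :=
      IsLocalization.map_nonZeroDivisors_le P.primeCompl _ ⟨c, c.2, rfl⟩
    intro u v h
    exact (mul_cancel_left_mem_nonZeroDivisors this).1 h
  have hmul : ∀ r ∈ IsLocalRing.maximalIdeal (Localization.AtPrime P), ∃ u, r * φ b = φ c * u := by
    intro r hr
    obtain ⟨a, t, rfl⟩ := IsLocalization.exists_mk'_eq P.primeCompl r
    have ha : a ∈ P := (IsLocalization.AtPrime.mk'_mem_maximal_iff _ P a t).1 hr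
    obtain ⟨u, hu⟩ := (hPc a).1 ha
    refine ⟨IsLocalization.mk' _ u t, ?_⟩
    rw [mul_comm, IsLocalization.mul_mk'_eq_mk'_of_mul, IsLocalization.mul_mk'_eq_mk'_of_mul, ← hu,
      mul_comm]
  obtain ⟨u, hu⟩ := hmul r1 (hmem r1 (by simp))
  obtain ⟨v, hv⟩ := hmul r2 (hmem r2 (by simp))
  have huv : r2 * u = r1 * v := by
    apply hφc
    linear_combination r1 * hv - r2 * hu
  obtain ⟨w, hw⟩ : ∃ w, u = r1 * w := by
    have h1 : (Submodule.Quotient.mk u : QuotSMulTop r1 (Localization.AtPrime P)) = 0 := by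
      apply hr2.right_eq_zero_of_smul
      rw [← Submodule.Quotient.mk_smul, Submodule.Quotient.mk_eq_zero, smul_eq_mul, huv]
      exact Submodule.smul_mem_pointwise_smul v r1 ⊤ trivial
    rw [Submodule.Quotient.mk_eq_zero, Submodule.mem_smul_pointwise_iff_exists] at h1
    obtain ⟨w, -, hw⟩ := h1
    exact ⟨w, hw.symm⟩
  have hbw : φ b = φ c * w := by
    apply hr1
    simp only [smul_eq_mul]
    rw [hu, hw]; ring
  obtain ⟨w0, t, rfl⟩ := IsLocalization.exists_mk'_eq P.primeCompl w
  rw [IsLocalization.mul_mk'_eq_mk'_of_mul, IsLocalization.eq_mk'_iff_mul_eq, ← map_mul] at hbw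
  obtain ⟨t', ht'⟩ := (IsLocalization.eq_iff_exists P.primeCompl _).1 hbw
  have : (t' * t : A) ∈ P := by
    rw [hPc]
    exact ⟨t' * w0, by linear_combination ht'⟩
  exact (hP.mem_or_mem this).elim t'.2 t.2

lemma mem_minimalPrimes_of_height_le_one (J : Ideal A) (g : A) (hg : g ∈ A⁰) (hgJ : g ∈ J)
    (P : Ideal A) [hP : P.IsPrime] (hJP : J ≤ P) (hht : P.height ≤ 1) : P ∈ J.minimalPrimes := by
  have h1 : 1 ≤ J.height :=
    (Ideal.one_le_height_span_singleton_of_mem_nonZeroDivisors hg).trans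
      (Ideal.height_mono ((Ideal.span_singleton_le_iff_mem _).2 hgJ))
  have : P.FiniteHeight := ⟨Or.inr (ne_top_of_le_ne_top (by simp) hht)⟩
  exact Ideal.mem_minimalPrimes_of_height_le hJP (hht.trans h1)

end GR

/-- Let `A` be a reduced Noetherian equidimensional ring satisfying
`(S₂)` with finite normalization, `J` a test ideal for `A`, and `J′ ⊆ A` a radical
ideal all of whose associated primes (of `A/J′`) are associated primes of `A/J`.
Then `n(A, J′) ≤ n(A, J)`. -/
theorem nSteps_mono_of_associatedPrimes_subset
    (A : Type*) [CommRing A] [IsReduced A] [IsNoetherianRing A]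
    [Module.Finite A (integralClosure A (FractionRing A))]
    (hequi : Equidimensional A) (hS2 : SerreS2 A)
    (J : Ideal A) (hJ : IsTestIdeal A J)
    (J' : Ideal A) (hrad' : J'.IsRadical)
    (hass : associatedPrimes A (A ⧸ J') ⊆ associatedPrimes A (A ⧸ J)) :
    nSteps A J' ≤ nSteps A J := by
  obtain ⟨⟨g, hgJ, hg⟩, hrad, -⟩ := hJ
  have hmin : ∀ P ∈ J'.minimalPrimes, J ≤ P := by
    intro P hP
    have h1 : P ∈ associatedPrimes A (A ⧸ J') := by
      apply Module.associatedPrimes.minimalPrimes_annihilator_subset_associatedPrimes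
      rwa [Ideal.annihilator_quotient]
    have h2 := IsAssociatedPrime.annihilator_le (hass h1)
    rwa [Submodule.annihilator_top, Ideal.annihilator_quotient] at h2
  have hJJ' : J ≤ J' := by
    rw [← hrad'.radical, ← Ideal.sInf_minimalPrimes]
    exact le_sInf hmin
  have hgJ' := hJJ' hgJ
  have hn : chainRing A J (nSteps A J) = chainRing A J (nSteps A J + 1) :=
    Nat.sInf_mem (s := {n | chainRing A J n = chainRing A J (n + 1)})
      (GR.chain_stab J g hg hgJ)
  generalize nSteps A J = n at hn
  apply Nat.sInf_le
  refine le_antisymm (GR.chain_mono J' n.le_succ) fun x hx => ?_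
  apply GR.sat_chain _ (GR.sat_bot hS2) J' g hg hgJ' n
  rintro P ⟨hP, hht⟩
  by_cases hle : J' ≤ P
  · have hPm' := GR.mem_minimalPrimes_of_height_le_one J' g hg hgJ' P hle hht
    have hPm := GR.mem_minimalPrimes_of_height_le_one J g hg hgJ P (hJJ'.trans hle) hht
    have h1 : ∃ s, s ∉ P ∧ ∀ j ∈ J, s * j ∈ J' := by
      obtain ⟨s, hs, h⟩ := GR.exists_mul_le J' hrad' P hPm'
      exact ⟨s, hs, fun j hj => h j (hPm.1.2 hj)⟩
    have h2 : ∃ s, s ∉ P ∧ ∀ j ∈ J', s * j ∈ J := by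
      obtain ⟨s, hs, h⟩ := GR.exists_mul_le J hrad P hPm
      exact ⟨s, hs, fun j hj => h j (hle hj)⟩
    obtain ⟨s, hs, hsx⟩ := (GR.loc_chain P J J' g hg hgJ hgJ' h1 h2 (n + 1)).2 x hx
    rw [← hn] at hsx
    obtain ⟨t, ht, htx⟩ := (GR.loc_chain P J J' g hg hgJ hgJ' h1 h2 n).1 _ hsx
    refine ⟨t * s, fun h => (hP.mem_or_mem h).elim ht hs, ?_⟩
    rwa [mul_smul]
  · obtain ⟨a, haJ, haP⟩ := SetLike.not_le_iff_exists.1 hle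
    refine ⟨a, haP, ?_⟩
    obtain ⟨b, -, e⟩ := GR.mem_endStep.1 hx (algebraMap A _ a)
      (Ideal.le_radical (Ideal.mem_map_of_mem _ haJ))
    rw [Algebra.smul_def, mul_comm]
    have e' : (b : FractionRing A) = x * algebraMap A (FractionRing A) a := e
    rw [← e']
    exact b.2
end
end
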